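/- Let 0 < a < b with a < |q|·b and let m ≥ 3 be an integer. For δ > 0 set 𝒮_δ := {(c,ζ) ∈ ℂ × ℂ : 0 < |c| ≤ δ, log|c| − log b ≤ Re ζ ≤ log|c| − log a} and 𝒮'_δ := {(c,ζ) ∈ ℂ × ℂ : 0 < |c| ≤ δ, log|c| − log b ≤ Re ζ ≤ log|c| − log a + λ₁}. Then there exist δ₀ > 0 and C > 0, depending only on τ, m, a, b, such that for every 0 < δ ≤ δ₀ and every Δ holomorphic on 𝒮_δ with ‖Δ‖_m := sup_{(c,ζ)∈𝒮_δ} |Δ(c,ζ)|·|ζ|^m < ∞, there is a unique holomorphic function φ on 𝒮'_δ satisfying: (1) φ(c, ζ+λ) − φ(c,ζ) = Δ(c,ζ) for all (c,ζ) ∈ 𝒮_δ; (2) φ is bounded on 𝒮'_δ and sup of |φ(c,ζ)|·√|Im(ζ/λ)| over {(c,ζ) ∈ 𝒮'_δ : Im(ζ/λ) ≤ −1} is finite; moreover this φ satisfies sup_{𝒮'_δ} |φ| ≤ C·‖Δ‖_m and |φ(c,ζ)| ≤ C·‖Δ‖_m/√|Im(ζ/λ)| whenever Im(ζ/λ) ≤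 −1. -/

import Mathlib

open Complex

/-- The parameter domain `𝒮_δ = {(c,ζ) : 0 < |c| ≤ δ, log|c| − log b ≤ Re ζ ≤ log|c| − log a}`. -/
noncomputable def paramStrip (a b δ : ℝ) : Set (ℂ × ℂ) :=
  {p : ℂ × ℂ | 0 < ‖p.1‖ ∧ ‖p.1‖ ≤ δ ∧
    Real.log ‖p.1‖ - Real.log b ≤ p.2.re ∧
    p.2.re ≤ Real.log ‖p.1‖ - Real.log a}

/-- The enlarged parameter domain `𝒮'_δ`, with `Re ζ ≤ log|c| − log a + λ₁`, `λ₁ = 2π·Im τ`. -/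
noncomputable def paramStrip' (τ : ℂ) (a b δ : ℝ) : Set (ℂ × ℂ) :=
  {p : ℂ × ℂ | 0 < ‖p.1‖ ∧ ‖p.1‖ ≤ δ ∧
    Real.log ‖p.1‖ - Real.log b ≤ p.2.re ∧
    p.2.re ≤ Real.log ‖p.1‖ - Real.log a + 2 * Real.pi * τ.im}

/-- The defining properties of the solution `φ` of statement 13: holomorphic on `𝒮'_δ`,
solving the difference equation (1) on `𝒮_δ`, bounded, and with bounded
`|φ|·√|Im(ζ/λ)|` on `{Im(ζ/λ) ≤ −1}` (condition (2)); here `λ = −2πiτ`. -/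
noncomputable def diffSolProp (τ : ℂ) (a b δ : ℝ) (Δ φ : ℂ × ℂ → ℂ) : Prop :=
  ContinuousOn φ (paramStrip' τ a b δ) ∧
  DifferentiableOn ℂ φ (interior (paramStrip' τ a b δ)) ∧
  (∀ p ∈ paramStrip a b δ,
    φ (p.1, p.2 + (-(2 * (Real.pi : ℂ) * Complex.I * τ))) - φ p = Δ p) ∧
  (∃ M : ℝ, ∀ p ∈ paramStrip' τ a b δ, ‖φ p‖ ≤ M) ∧
  (∃ M : ℝ, ∀ p ∈ paramStrip' τ a b δ,
    (p.2 / (-(2 * (Real.pi : ℂ) * Complex.I * τ))).im ≤ -1 →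
    ‖φ p‖ *
      Real.sqrt |(p.2 / (-(2 * (Real.pi : ℂ) * Complex.I * τ))).im| ≤ M)

/-!
For fixed `c` the equation `φ (ζ + lam) - φ ζ = Δ ζ` is solved by a periodic Cauchy transform: one
integrates `Δ` along a vertical line against a `lam`-periodic kernel with simple poles at the
multiples of `lam`, which vanishes as `im (z / lam) → -∞`. Replacing `ζ` by `ζ + lam` amounts to
moving the line from the left of `ζ` to its right, which picks up the residue `Δ ζ`; otherwise the
transform does not depend on the line, so the line may follow `ζ` across the strip, and the edges of
the closed strip are reached through the equation itself. Since `re ζ` is bounded away from `0` for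
small `δ`, a decay of order `‖ζ‖ ^ (-3)` pays for an integrable `(1 + im ζ ^ 2)⁻¹` and leaves one
power of `‖ζ‖`, which turns into decay of order `|im (ζ / lam)|⁻¹` of the solution; this is more
than the square root asked for.

The difference of two solutions is `lam`-periodic in `ζ`, hence extends to a bounded entire
function, which is constant by Liouville's theorem and zero because of its decay.
-/

namespace StripDifference

open Set Filter Topology MeasureTheory

/-! ### Integrals along vertical lines -/

/-- The filter of points of the closed strip `a ≤ re z ≤ b` whose imaginary part tends to `±∞`. -/
def stripEnds (a b : ℝ) : Filter ℂ :=
  comap (fun z => |z.im|) atTop ⊓ 𝓟 (re ⁻¹' Icc a b)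

lemma eventually_stripEnds {a b : ℝ} {p : ℂ → Prop} :
    (∀ᶠ z in stripEnds a b, p z) ↔ ∃ T : ℝ, ∀ z : ℂ, z.re ∈ Icc a b → T ≤ |z.im| → p z := by
  rw [stripEnds, eventually_inf_principal, eventually_comap, eventually_atTop]
  exact ⟨fun ⟨T, h⟩ => ⟨T, fun z hz hT => h _ hT z rfl hz⟩,
    fun ⟨T, h⟩ => ⟨T, fun s hs z hz hzs => h z hzs (hz ▸ hs)⟩⟩

lemma tendsto_stripEnds_add {a b a' b' : ℝ} (p : ℂ) (ha : a' ≤ a + p.re) (hb : b + p.re ≤ b') :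
    Tendsto (· + p) (stripEnds a b) (stripEnds a' b') := by
  refine tendsto_iff_eventually.2 fun q hq => ?_
  obtain ⟨T, hT⟩ := eventually_stripEnds.1 hq
  refine eventually_stripEnds.2 ⟨T + |p.im|, fun z hz hzT => hT _ ⟨?_, ?_⟩ ?_⟩
  · exact ha.trans (by simpa using hz.1)
  · exact le_trans (by simpa using hz.2) hb
  · have := abs_add_le (z.im + p.im) (-p.im)
    simp only [add_neg_cancel_right, abs_neg] at this
    simp only [add_im]
    linarith

section VerticalLines

variable {f : ℂ → ℂ} {a b : ℝ}

lemma tendsto_integral_horizontalLine (hab : a ≤ b) (h0 : Tendsto f (stripEnds a b) (𝓝 0)) :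
    Tendsto (fun T : ℝ => ∫ x in a..b, f (x + T * I)) (comap abs atTop) (𝓝 0) := by
  refine Metric.tendsto_nhds.2 fun ε hε => ?_
  obtain ⟨T₀, hT₀⟩ := eventually_stripEnds.1
    (Metric.tendsto_nhds.1 h0 (ε / (b - a + 1)) (div_pos hε (by linarith)))
  refine eventually_comap.2 ((eventually_ge_atTop T₀).mono fun s hs T hT => ?_)
  rw [dist_zero_right]
  calc ‖∫ x in a..b, f (x + T * I)‖ ≤ ε / (b - a + 1) * |b - a| := by
        refine intervalIntegral.norm_integral_le_of_norm_le_const fun x hx => ?_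
        rw [uIoc_of_le hab] at hx
        simpa using (hT₀ (x + T * I) (by simpa using Ioc_subset_Icc_self hx)
          (by simpa [hT] using hs)).le
    _ < ε := by
        rw [abs_of_nonneg (by linarith), div_mul_eq_mul_div, div_lt_iff₀ (by linarith)]
        exact mul_lt_mul_of_pos_left (by linarith) hε

/-- The boundary integral over the rectangle `[a, b] × [-T, T]` vanishes, and its horizontal sides
disappear as `T → ∞`. -/
lemma tendsto_integral_verticalLine_sub (hab : a ≤ b)
    (hf : DifferentiableOn ℂ f (re ⁻¹' Icc a b)) (h0 : Tendsto f (stripEnds a b) (𝓝 0)) :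
    Tendsto (fun T : ℝ => (∫ y in -T..T, f (b + y * I)) - ∫ y in -T..T, f (a + y * I))
      atTop (𝓝 0) := by
  have hrect (T : ℝ) : (∫ y in -T..T, f (b + y * I)) - ∫ y in -T..T, f (a + y * I) =
      I * ((∫ x in a..b, f (x + (-T : ℝ) * I)) - ∫ x in a..b, f (x + T * I)) := by
    have hCauchy : (∫ x in a..b, f (x + (-T : ℝ) * I)) - (∫ x in a..b, f (x + T * I)) +
        I * (∫ y in -T..T, f (b + y * I)) - I * (∫ y in -T..T, f (a + y * I)) = 0 := by
      simpa using integral_boundary_rect_eq_zero_of_differentiableOn f (a - T * I) (b + T * I)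
        (hf.mono fun z hz => by simpa [uIcc_of_le hab] using (mem_reProdIm.1 hz).1)
    linear_combination -I * hCauchy +
      ((∫ y in -T..T, f (b + y * I)) - ∫ y in -T..T, f (a + y * I)) * I_sq
  have htop : Tendsto (fun T : ℝ => T) atTop (comap abs atTop) :=
    tendsto_comap_iff.2 tendsto_abs_atTop_atTop
  have hbot : Tendsto (fun T : ℝ => -T) atTop (comap abs atTop) :=
    tendsto_comap_iff.2 (by simpa [Function.comp_def] using tendsto_abs_atTop_atTop)
  have hhor := tendsto_integral_horizontalLine hab h0
  simpa [hrect] using ((hhor.comp hbot).sub (hhor.comp htop)).const_mul I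

lemma integral_verticalLine_inv {u : ℝ} (hu : u ≠ 0) (T : ℝ) :
    ∫ y in -T..T, ((u : ℂ) + y * I)⁻¹ = 2 * Real.arctan (T / u) := by
  have hne (y : ℝ) : (u : ℂ) + y * I ≠ 0 := fun h => hu (by simpa using congrArg re h)
  have hcont : Continuous fun y : ℝ => ((u : ℂ) + y * I)⁻¹ :=
    Continuous.inv₀ (by fun_prop) hne
  have hpair (y : ℝ) :
      ((u : ℂ) + y * I)⁻¹ + ((u : ℂ) + (-y : ℝ) * I)⁻¹ = (2 * u * (u ^ 2 + y ^ 2)⁻¹ : ℝ) := by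
    have hprod : (u : ℂ) ^ 2 + y ^ 2 = (u + y * I) * (u + (-y : ℝ) * I) := by
      push_cast
      linear_combination (y : ℂ) ^ 2 * I_sq
    rw [inv_add_inv (hne y) (hne (-y)), ← hprod]
    push_cast
    ring
  have hflip : ∫ y in -T..T, ((u : ℂ) + (-y : ℝ) * I)⁻¹ = ∫ y in -T..T, ((u : ℂ) + y * I)⁻¹ := by
    simpa using intervalIntegral.integral_comp_neg (a := -T) (b := T)
      (fun y : ℝ => ((u : ℂ) + y * I)⁻¹)
  have hsum : (∫ y in -T..T, ((u : ℂ) + y * I)⁻¹) + ∫ y in -T..T, ((u : ℂ) + (-y : ℝ) * I)⁻¹ =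
      (2 * u * ∫ y in -T..T, (u ^ 2 + y ^ 2)⁻¹ : ℝ) := by
    rw [← intervalIntegral.integral_add (hcont.intervalIntegrable _ _)
      (Continuous.intervalIntegrable (by exact hcont.comp continuous_neg) _ _)]
    simp only [hpair, intervalIntegral.integral_ofReal, intervalIntegral.integral_const_mul]
  have harctan : 2 * u * ∫ y in -T..T, (u ^ 2 + y ^ 2)⁻¹ = 4 * Real.arctan (T / u) := by
    rw [integral_inv_sq_add_sq hu, neg_div, Real.arctan_neg]
    field_simp
    ring
  rw [hflip, harctan] at hsum
  simp only [ofReal_mul, ofReal_ofNat] at hsum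
  linear_combination hsum / 2

lemma tendsto_integral_verticalLine_inv_sub (ha : a < 0) (hb : 0 < b) :
    Tendsto (fun T : ℝ => (∫ y in -T..T, ((b : ℂ) + y * I)⁻¹) - ∫ y in -T..T, ((a : ℂ) + y * I)⁻¹)
      atTop (𝓝 (2 * Real.pi)) := by
  simp only [integral_verticalLine_inv ha.ne, integral_verticalLine_inv hb.ne']
  have htop := (tendsto_nhds_of_tendsto_nhdsWithin Real.tendsto_arctan_atTop).comp
    (tendsto_id.atTop_div_const hb)
  have hbot := (tendsto_nhds_of_tendsto_nhdsWithin Real.tendsto_arctan_atBot).comp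
    (tendsto_id.atTop_div_const_of_neg ha)
  convert ((continuous_ofReal.tendsto _).comp ((htop.sub hbot).const_mul 2)) using 2
  · simp [mul_sub]
  · push_cast
    ring

lemma tendsto_inv_stripEnds : Tendsto (fun z : ℂ => z⁻¹) (stripEnds a b) (𝓝 0) := by
  refine tendsto_inv₀_cobounded.comp (tendsto_norm_atTop_iff_cobounded.1 ?_)
  exact tendsto_atTop_mono abs_im_le_norm (tendsto_comap.mono_left inf_le_left)

lemma exists_differentiableOn_eq_sub_of_simple_pole {s : Set ℂ} {p r : ℂ} (hs : s ∈ 𝓝 p)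
    (hf : DifferentiableOn ℂ f (s \ {p})) (hr : Tendsto (fun z => (z - p) * f z) (𝓝[≠] p) (𝓝 r)) :
    ∃ g : ℂ → ℂ, DifferentiableOn ℂ g s ∧ ∀ z ≠ p, g z = f z - r * (z - p)⁻¹ := by
  set g : ℂ → ℂ := fun z => f z - r * (z - p)⁻¹ with hg
  refine ⟨Function.update g p (limUnder (𝓝[≠] p) g),
    differentiableOn_update_limUnder_of_isLittleO hs (hf.sub ?_) ?_,
    fun z hz => Function.update_of_ne hz _ _⟩
  · exact DifferentiableOn.const_mul (DifferentiableOn.inv (by fun_prop)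
      fun z hz => sub_ne_zero.2 hz.2) r
  · have hne : ∀ᶠ z in 𝓝[≠] p, z - p ≠ 0 :=
      eventually_mem_nhdsWithin.mono fun z hz => sub_ne_zero.2 hz
    refine (Asymptotics.isLittleO_iff_tendsto'
      (hne.mono fun z hz h => absurd h (inv_ne_zero hz))).2 ?_
    have hz0 : Tendsto (fun z => z - p) (𝓝[≠] p) (𝓝 0) :=
      ((continuous_id.sub continuous_const).tendsto' p 0 (sub_self p)).mono_left nhdsWithin_le_nhds
    have hlim : Tendsto (fun z => (z - p) * f z - r - (z - p) * g p) (𝓝[≠] p) (𝓝 0) := by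
      simpa using (hr.sub_const r).sub (hz0.mul_const (g p))
    refine hlim.congr' (hne.mono fun z hz => ?_)
    simp only [hg]
    field_simp

lemma tendsto_integral_verticalLine_sub_of_simple_pole {r : ℂ} (ha : a < 0) (hb : 0 < b)
    (hf : DifferentiableOn ℂ f (re ⁻¹' Icc a b \ {0}))
    (hr : Tendsto (fun z => z * f z) (𝓝[≠] 0) (𝓝 r)) (h0 : Tendsto f (stripEnds a b) (𝓝 0)) :
    Tendsto (fun T : ℝ => (∫ y in -T..T, f (b + y * I)) - ∫ y in -T..T, f (a + y * I))
      atTop (𝓝 (2 * Real.pi * r)) := by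
  obtain ⟨g, hg, hgf⟩ := exists_differentiableOn_eq_sub_of_simple_pole (p := 0)
    (continuous_re.continuousAt.preimage_mem_nhds (by simpa using Icc_mem_nhds ha hb)) hf
    (by simpa using hr)
  simp only [sub_zero] at hgf
  have hg0 : Tendsto g (stripEnds a b) (𝓝 0) := by
    have h := h0.sub (tendsto_inv_stripEnds.const_mul r)
    rw [mul_zero, sub_zero] at h
    refine h.congr' (eventually_stripEnds.2 ⟨1, fun z _ hz => (hgf z ?_).symm⟩)
    rintro rfl
    norm_num at hz
  have hline {u : ℝ} (hu : u ≠ 0) (huab : u ∈ Icc a b) (T : ℝ) : ∫ y in -T..T, f (u + y * I) =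
      (∫ y in -T..T, g (u + y * I)) + r * ∫ y in -T..T, ((u : ℂ) + y * I)⁻¹ := by
    have hne (y : ℝ) : (u : ℂ) + y * I ≠ 0 := fun h => hu (by simpa using congrArg re h)
    rw [← intervalIntegral.integral_const_mul, ← intervalIntegral.integral_add]
    · simp [hgf _ (hne _)]
    · exact (hg.continuousOn.comp_continuous (by fun_prop)
        fun y => by simpa using huab).intervalIntegrable _ _
    · exact (continuous_const.mul (Continuous.inv₀ (by fun_prop) hne)).intervalIntegrable _ _
  have hlim := (tendsto_integral_verticalLine_sub (ha.trans hb).le hg hg0).add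
    ((tendsto_integral_verticalLine_inv_sub ha hb).const_mul r)
  rw [zero_add, mul_comm r] at hlim
  refine hlim.congr fun T => ?_
  rw [hline hb.ne' ⟨(ha.trans hb).le, le_rfl⟩, hline ha.ne ⟨le_rfl, (ha.trans hb).le⟩]
  ring

lemma tendsto_integral_symmetric {g : ℝ → ℂ} (hg : Integrable g) :
    Tendsto (fun T : ℝ => ∫ y in -T..T, g y) atTop (𝓝 (∫ y, g y)) :=
  intervalIntegral_tendsto_integral hg tendsto_neg_atTop_atBot tendsto_id

lemma integral_verticalLine_eq (hab : a ≤ b) (hf : DifferentiableOn ℂ f (re ⁻¹' Icc a b))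
    (h0 : Tendsto f (stripEnds a b) (𝓝 0)) (ha : Integrable fun y : ℝ => f (a + y * I))
    (hb : Integrable fun y : ℝ => f (b + y * I)) :
    ∫ y : ℝ, f (b + y * I) = ∫ y : ℝ, f (a + y * I) :=
  sub_eq_zero.1 <| tendsto_nhds_unique
    ((tendsto_integral_symmetric hb).sub (tendsto_integral_symmetric ha))
    (tendsto_integral_verticalLine_sub hab hf h0)

lemma integral_verticalLine_sub_eq_residue {p r : ℂ} (hap : a < p.re) (hpb : p.re < b)
    (hf : DifferentiableOn ℂ f (re ⁻¹' Icc a b \ {p}))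
    (hr : Tendsto (fun z => (z - p) * f z) (𝓝[≠] p) (𝓝 r)) (h0 : Tendsto f (stripEnds a b) (𝓝 0))
    (ha : Integrable fun y : ℝ => f (a + y * I)) (hb : Integrable fun y : ℝ => f (b + y * I)) :
    (∫ y : ℝ, f (b + y * I)) - ∫ y : ℝ, f (a + y * I) = 2 * Real.pi * r := by
  have hshift (u y : ℝ) : ((u - p.re : ℝ) : ℂ) + y * I + p = u + (y + p.im : ℝ) * I := by
    apply Complex.ext <;> simp
  have hlim := tendsto_integral_verticalLine_sub_of_simple_pole (f := fun z => f (z + p)) (r := r)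
    (sub_neg.2 hap) (sub_pos.2 hpb) ?_ ?_ ?_
  · simp only [hshift] at hlim
    rw [← tendsto_nhds_unique ((tendsto_integral_symmetric (hb.comp_add_right p.im)).sub
      (tendsto_integral_symmetric (ha.comp_add_right p.im))) hlim,
      integral_add_right_eq_self (fun y : ℝ => f (b + y * I)),
      integral_add_right_eq_self (fun y : ℝ => f (a + y * I))]
  · exact hf.comp (by fun_prop) fun z hz => by simpa [sub_le_iff_le_add, le_sub_iff_add_le] using hz
  · have htrans : Tendsto (· + p) (𝓝[≠] (0 : ℂ)) (𝓝[≠] p) := by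
      refine tendsto_nhdsWithin_of_tendsto_nhds_of_eventually_within _ ?_ ?_
      · exact ((continuous_add_const p).tendsto' 0 p (zero_add p)).mono_left nhdsWithin_le_nhds
      · exact eventually_mem_nhdsWithin.mono fun z hz => by simpa using hz
    simpa [Function.comp_def] using hr.comp htrans
  · exact h0.comp (tendsto_stripEnds_add p (by simp) (by simp))

end VerticalLines

/-! ### The periodic kernel -/

/-- The `lam`-periodic kernel with simple poles at the multiples of `lam`, tending to `1` as
`im (z / lam) → ∞` and to `0` as `im (z / lam) → -∞`. -/
noncomputable def periodicKernel (lam z : ℂ) : ℂ :=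
  (1 - exp (2 * Real.pi * I * z / lam))⁻¹

/-- The `lam`-periodic weight `1 + max (0, -im (z / lam))`, measuring the decay required of
solutions as `im (z / lam) → -∞`. -/
noncomputable def lowerWeight (lam z : ℂ) : ℝ :=
  1 + max 0 (-(z / lam).im)

section Kernel

variable {lam z : ℂ}

lemma one_le_lowerWeight : 1 ≤ lowerWeight lam z :=
  le_add_of_nonneg_right (le_max_left _ _)

lemma lowerWeight_pos : 0 < lowerWeight lam z :=
  one_pos.trans_le one_le_lowerWeight

lemma lowerWeight_add_period (hlam : lam ≠ 0) (z : ℂ) :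
    lowerWeight lam (z + lam) = lowerWeight lam z := by
  simp [lowerWeight, add_div, div_self hlam]

lemma lowerWeight_sub_period (hlam : lam ≠ 0) (z : ℂ) :
    lowerWeight lam (z - lam) = lowerWeight lam z := by
  rw [← lowerWeight_add_period hlam, sub_add_cancel]

lemma lowerWeight_le_mul (z w : ℂ) :
    lowerWeight lam z ≤ (1 + ‖lam‖⁻¹) * (1 + ‖w‖) * lowerWeight lam (z - w) := by
  have him : -(w / lam).im ≤ ‖lam‖⁻¹ * ‖w‖ := by
    simpa [div_eq_inv_mul] using (neg_le_abs _).trans (abs_im_le_norm (w / lam))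
  have hadd : lowerWeight lam z ≤ lowerWeight lam (z - w) + ‖lam‖⁻¹ * ‖w‖ := by
    simp only [lowerWeight, sub_div, sub_im, add_assoc]
    gcongr
    refine max_le (by positivity) ?_
    linarith [le_max_right 0 (-((z / lam).im - (w / lam).im))]
  have hw := one_le_lowerWeight (lam := lam) (z := z - w)
  calc lowerWeight lam z ≤ lowerWeight lam (z - w) + ‖lam‖⁻¹ * ‖w‖ := hadd
    _ ≤ lowerWeight lam (z - w) + ‖lam‖⁻¹ * ‖w‖ * lowerWeight lam (z - w) :=
        add_le_add_right (le_mul_of_one_le_right (by positivity) hw) _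
    _ = (1 + ‖lam‖⁻¹ * ‖w‖) * lowerWeight lam (z - w) := by ring
    _ ≤ (1 + ‖lam‖⁻¹) * (1 + ‖w‖) * lowerWeight lam (z - w) := by
        refine mul_le_mul_of_nonneg_right ?_ lowerWeight_pos.le
        linarith [norm_nonneg w, inv_nonneg.2 (norm_nonneg lam)]

lemma periodicKernel_add_period (hlam : lam ≠ 0) (z : ℂ) :
    periodicKernel lam (z + lam) = periodicKernel lam z := by
  simp only [periodicKernel, mul_add, add_div, mul_div_cancel_right₀ _ hlam, exp_add,
    exp_two_pi_mul_I, mul_one]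

lemma norm_exp_two_pi_I_mul_div (lam z : ℂ) :
    ‖exp (2 * Real.pi * I * z / lam)‖ = Real.exp (-(2 * Real.pi * (z / lam).im)) := by
  rw [norm_exp, mul_div_assoc]
  congr 1
  simp

lemma lowerWeight_mul_norm_periodicKernel_le_two (h : 1 ≤ |(z / lam).im|) :
    lowerWeight lam z * ‖periodicKernel lam z‖ ≤ 2 := by
  have hpi := Real.pi_gt_three
  have hle := abs_norm_sub_norm_le 1 (exp (2 * Real.pi * I * z / lam))
  rw [norm_exp_two_pi_I_mul_div, norm_one] at hle
  have hexp := Real.add_one_le_exp (2 * Real.pi * |(z / lam).im|)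
  suffices lowerWeight lam z ≤ 2 * ‖1 - exp (2 * Real.pi * I * z / lam)‖ by
    rw [periodicKernel, norm_inv]
    exact mul_inv_le_of_le_mul₀ (norm_nonneg _) zero_le_two this
  rcases le_total 0 (z / lam).im with hv | hv
  · rw [abs_of_nonneg hv] at h hexp
    have hinv : Real.exp (-(2 * Real.pi * (z / lam).im)) ≤ 2⁻¹ := by
      rw [Real.exp_neg]
      exact inv_anti₀ two_pos (by nlinarith)
    rw [lowerWeight, max_eq_left (by linarith)]
    linarith [le_abs_self (1 - Real.exp (-(2 * Real.pi * (z / lam).im)))]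
  · rw [abs_of_nonpos hv, mul_neg] at hexp
    rw [abs_of_nonpos hv] at h
    rw [lowerWeight, max_eq_right (by linarith)]
    nlinarith [neg_le_abs (1 - Real.exp (-(2 * Real.pi * (z / lam).im)))]

lemma norm_periodicKernel_le_lowerWeight_mul :
    ‖periodicKernel lam z‖ ≤ lowerWeight lam z * ‖periodicKernel lam z‖ :=
  le_mul_of_one_le_left (norm_nonneg _) one_le_lowerWeight

lemma one_sub_exp_ne_zero (hz : z ≠ 0) (hre : |z.re| < lam.re) :
    1 - exp (2 * Real.pi * I * z / lam) ≠ 0 := by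
  have hlampos : 0 < lam.re := (abs_nonneg _).trans_lt hre
  have hlam : lam ≠ 0 := ne_of_apply_ne re hlampos.ne'
  intro h
  obtain ⟨n, hn⟩ := exp_eq_one_iff.1 (sub_eq_zero.1 h).symm
  have hzn : z = lam * n := by
    have : (2 * Real.pi * I : ℂ) ≠ 0 := two_pi_I_ne_zero
    field_simp at hn
    exact hn
  have hn0 : (n : ℝ) ≠ 0 := by rintro h0; simp_all
  have hn1 : (1 : ℝ) ≤ |(n : ℝ)| := by exact_mod_cast Int.one_le_abs (by exact_mod_cast hn0)
  have hzre : z.re = lam.re * n := by simp [hzn]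
  rw [hzre, abs_mul, abs_of_pos hlampos] at hre
  nlinarith

lemma differentiableAt_periodicKernel (hz : z ≠ 0) (hre : |z.re| < lam.re) :
    DifferentiableAt ℂ (periodicKernel lam) z :=
  DifferentiableAt.inv (by fun_prop) (one_sub_exp_ne_zero hz hre)

lemma tendsto_mul_periodicKernel (hlam : lam ≠ 0) :
    Tendsto (fun z => z * periodicKernel lam z) (𝓝[≠] 0) (𝓝 (-lam / (2 * Real.pi * I))) := by
  have hderiv : HasDerivAt (fun z => 1 - exp (2 * Real.pi * I * z / lam))
      (-(2 * Real.pi * I / lam)) 0 := by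
    simpa using
      ((((hasDerivAt_id (0 : ℂ)).const_mul (2 * Real.pi * I)).div_const lam).cexp).const_sub 1
  have hne : -(2 * Real.pi * I / lam) ≠ 0 := neg_ne_zero.2 (div_ne_zero two_pi_I_ne_zero hlam)
  have hslope := (hasDerivAt_iff_tendsto_slope.1 hderiv).inv₀ hne
  rw [← neg_inv, inv_div, ← neg_div] at hslope
  refine hslope.congr fun z => ?_
  simp [slope_def_field, periodicKernel, div_eq_mul_inv, mul_comm]

lemma tendsto_abs_im_div_stripEnds (hlam : 0 < lam.re) (a b : ℝ) :
    Tendsto (fun z => |(z / lam).im|) (stripEnds a b) atTop := by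
  have hnorm : 0 < normSq lam := normSq_pos.2 (ne_of_apply_ne re hlam.ne')
  have hlow : Tendsto (fun z : ℂ => (lam.re * |z.im| - |lam.im| * max |a| |b|) / normSq lam)
      (stripEnds a b) atTop := by
    refine Tendsto.atTop_div_const hnorm (tendsto_atTop_add_const_right _ _ ?_)
    exact (tendsto_comap.mono_left inf_le_left).const_mul_atTop hlam
  refine tendsto_atTop_mono' _ (eventually_stripEnds.2 ⟨0, fun z hz _ => ?_⟩) hlow
  have him : (z / lam).im = (lam.re * z.im - lam.im * z.re) / normSq lam := by
    rw [div_im]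
    ring
  have hsub := abs_sub_abs_le_abs_sub (lam.re * z.im) (lam.im * z.re)
  rw [abs_mul, abs_mul, abs_of_pos hlam] at hsub
  have hre := mul_le_mul_of_nonneg_left (abs_le_max_abs_abs hz.1 hz.2) (abs_nonneg lam.im)
  simp only [him, abs_div, abs_of_pos hnorm]
  gcongr
  linarith

lemma eventually_lowerWeight_mul_norm_periodicKernel_le_two (hlam : 0 < lam.re) (a b : ℝ) :
    ∀ᶠ z in stripEnds a b, lowerWeight lam z * ‖periodicKernel lam z‖ ≤ 2 :=
  ((tendsto_abs_im_div_stripEnds hlam a b).eventually_ge_atTop 1).mono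
    fun _ => lowerWeight_mul_norm_periodicKernel_le_two

lemma continuous_lowerWeight (lam : ℂ) : Continuous (lowerWeight lam) := by
  unfold lowerWeight
  fun_prop

lemma exists_lowerWeight_mul_norm_periodicKernel_le {ε : ℝ} (hlam : 0 < lam.re) (hε : 0 < ε) :
    ∃ C, ∀ z : ℂ, z.re ∈ Icc ε (lam.re - ε) → lowerWeight lam z * ‖periodicKernel lam z‖ ≤ C := by
  obtain ⟨T, hT⟩ := eventually_stripEnds.1
    (eventually_lowerWeight_mul_norm_periodicKernel_le_two hlam ε (lam.re - ε))
  have hcont : ContinuousOn (fun z => lowerWeight lam z * ‖periodicKernel lam z‖)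
      (Icc ε (lam.re - ε) ×ℂ Icc (-T) T) := by
    refine (continuous_lowerWeight lam).continuousOn.mul (ContinuousOn.norm fun z hz => ?_)
    have hz := (mem_reProdIm.1 hz).1
    refine (differentiableAt_periodicKernel ?_ ?_).continuousAt.continuousWithinAt
    · rintro rfl
      exact absurd hz.1 (by simpa using hε)
    · exact abs_lt.2 ⟨by linarith [hz.1], by linarith [hz.2]⟩
  obtain ⟨C, hC⟩ := ((isCompact_Icc.reProdIm isCompact_Icc).bddAbove_image hcont)
  refine ⟨max C 2, fun z hz => ?_⟩
  rcases le_total T |z.im| with h | h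
  · exact (hT z hz h).trans (le_max_right _ _)
  · exact (hC ⟨z, ⟨hz, abs_le.1 h⟩, rfl⟩).trans (le_max_left _ _)

end Kernel

/-! ### Periodic Cauchy transforms along vertical lines -/

/-- The decay on `s` that makes the Cauchy integrals along vertical lines converge, one power of
`‖z‖` being spent on the weight `lowerWeight`. -/
def DecayBoundOn (f : ℂ → ℂ) (s : Set ℂ) (M : ℝ) : Prop :=
  ∀ z ∈ s, (1 + ‖z‖) * ‖f z‖ ≤ M * (1 + z.im ^ 2)⁻¹

/-- The periodic Cauchy transform of `f` along the vertical line `re = u`. -/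
noncomputable def lineTransform (lam : ℂ) (f : ℂ → ℂ) (u : ℝ) (ζ : ℂ) : ℂ :=
  I / lam * ∫ y : ℝ, f (u + y * I) * periodicKernel lam (ζ - (u + y * I))

section LineTransform

variable {lam ζ : ℂ} {f : ℂ → ℂ} {s t : Set ℂ} {M : ℝ}

lemma DecayBoundOn.mono (hf : DecayBoundOn f s M) (hts : t ⊆ s) : DecayBoundOn f t M :=
  fun z hz => hf z (hts hz)

lemma DecayBoundOn.norm_le (hf : DecayBoundOn f s M) {z : ℂ} (hz : z ∈ s) :
    ‖f z‖ ≤ M * (1 + z.im ^ 2)⁻¹ :=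
  (le_mul_of_one_le_left (norm_nonneg _) (by linarith [norm_nonneg z])).trans (hf z hz)

lemma DecayBoundOn.tendsto_stripEnds {a b : ℝ} (hf : DecayBoundOn f (re ⁻¹' Icc a b) M) :
    Tendsto f (stripEnds a b) (𝓝 0) := by
  have him : Tendsto (fun z : ℂ => |z.im|) (stripEnds a b) atTop :=
    tendsto_comap.mono_left inf_le_left
  have hdecay : Tendsto (fun z : ℂ => M * (1 + z.im ^ 2)⁻¹) (stripEnds a b) (𝓝 0) := by
    simp only [← sq_abs (im _)]
    simpa using (tendsto_inv_atTop_zero.comp (tendsto_atTop_add_const_left _ 1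
      ((tendsto_pow_atTop two_ne_zero).comp him))).const_mul M
  exact squeeze_zero_norm' (eventually_stripEnds.2 ⟨0, fun z hz _ => hf.norm_le hz⟩) hdecay

lemma tendsto_mul_periodicKernel_stripEnds {a b : ℝ} (hlam : 0 < lam.re)
    (hf : DecayBoundOn f (re ⁻¹' Icc a b) M) (ζ : ℂ) :
    Tendsto (fun z => f z * periodicKernel lam (ζ - z)) (stripEnds a b) (𝓝 0) := by
  refine squeeze_zero_norm' ?_ (by simpa using hf.tendsto_stripEnds.norm.mul_const 2)
  filter_upwards [(tendsto_abs_im_div_stripEnds hlam a b).eventually_ge_atTop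
    (1 + |(ζ / lam).im|)] with z hz
  rw [norm_mul]
  gcongr
  refine norm_periodicKernel_le_lowerWeight_mul.trans
    (lowerWeight_mul_norm_periodicKernel_le_two ?_)
  rw [sub_div, sub_im, abs_sub_comm]
  linarith [abs_sub_abs_le_abs_sub (z / lam).im (ζ / lam).im]

lemma exists_lowerWeight_mul_norm_mul_periodicKernel_le {ε : ℝ} (hlam : 0 < lam.re) (hε : 0 < ε) :
    ∃ K, 0 ≤ K ∧ ∀ ζ z w : ℂ, ζ.re - z.re ∈ Icc ε (lam.re - ε) →
      lowerWeight lam ζ * ‖w * periodicKernel lam (ζ - z)‖ ≤ K * ((1 + ‖z‖) * ‖w‖) := by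
  obtain ⟨C, hC⟩ := exists_lowerWeight_mul_norm_periodicKernel_le hlam hε
  refine ⟨(1 + ‖lam‖⁻¹) * |C|, by positivity, fun ζ z w h => ?_⟩
  have hk := (hC (ζ - z) (by simpa using h)).trans (le_abs_self C)
  calc lowerWeight lam ζ * ‖w * periodicKernel lam (ζ - z)‖
      ≤ (1 + ‖lam‖⁻¹) * (1 + ‖z‖) * lowerWeight lam (ζ - z) *
          ‖w * periodicKernel lam (ζ - z)‖ := by
        gcongr
        exact lowerWeight_le_mul ζ z
    _ = (1 + ‖lam‖⁻¹) * ((1 + ‖z‖) * ‖w‖) *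
          (lowerWeight lam (ζ - z) * ‖periodicKernel lam (ζ - z)‖) := by
        rw [norm_mul]
        ring
    _ ≤ (1 + ‖lam‖⁻¹) * ((1 + ‖z‖) * ‖w‖) * |C| := by gcongr
    _ = (1 + ‖lam‖⁻¹) * |C| * ((1 + ‖z‖) * ‖w‖) := by ring

lemma exists_lowerWeight_mul_norm_integrand_le {ε : ℝ} (hlam : 0 < lam.re) (hε : 0 < ε) :
    ∃ K, 0 ≤ K ∧ ∀ {f : ℂ → ℂ} {u M : ℝ}, DecayBoundOn f (re ⁻¹' {u}) M →
      ∀ {ζ : ℂ}, ζ.re - u ∈ Icc ε (lam.re - ε) → ∀ y : ℝ,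
        lowerWeight lam ζ * ‖f (u + y * I) * periodicKernel lam (ζ - (u + y * I))‖ ≤
          K * M * (1 + y ^ 2)⁻¹ := by
  obtain ⟨K, hK0, hK⟩ := exists_lowerWeight_mul_norm_mul_periodicKernel_le hlam hε
  refine ⟨K, hK0, fun {f u M} hf {ζ} hζ y => (hK ζ _ _ (by simpa using hζ)).trans ?_⟩
  rw [mul_assoc]
  exact mul_le_mul_of_nonneg_left (by simpa using hf (u + y * I) (by simp)) hK0

lemma continuous_mul_periodicKernel_line {u : ℝ} (hf : Continuous fun y : ℝ => f (u + y * I))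
    (hζ : ζ.re - u ∈ Ioo 0 lam.re) :
    Continuous fun y : ℝ => f (u + y * I) * periodicKernel lam (ζ - (u + y * I)) := by
  refine hf.mul (continuous_iff_continuousAt.2 fun y => ?_)
  refine ContinuousAt.comp' (f := fun y : ℝ => ζ - (u + y * I)) ?_ (by fun_prop)
  refine (differentiableAt_periodicKernel (fun h => ?_) ?_).continuousAt
  · exact hζ.1.ne' (by simpa using congrArg re h)
  · simpa [abs_of_pos hζ.1] using hζ.2

lemma integrable_mul_periodicKernel {u : ℝ} (hf : Continuous fun y : ℝ => f (u + y * I))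
    (hM : DecayBoundOn f (re ⁻¹' {u}) M) (hζ : ζ.re - u ∈ Ioo 0 lam.re) :
    Integrable fun y : ℝ => f (u + y * I) * periodicKernel lam (ζ - (u + y * I)) := by
  obtain ⟨K, -, hK⟩ := exists_lowerWeight_mul_norm_integrand_le (hζ.1.trans hζ.2)
    (lt_min hζ.1 (sub_pos.2 hζ.2))
  refine (integrable_inv_one_add_sq.const_mul (K * M)).mono'
    (continuous_mul_periodicKernel_line hf hζ).aestronglyMeasurable (ae_of_all _ fun y => ?_)
  refine (le_mul_of_one_le_left (norm_nonneg _) one_le_lowerWeight).trans (hK hM ?_ y)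
  exact ⟨min_le_left _ _, le_sub_comm.1 (min_le_right _ _)⟩

lemma lineTransform_add_period (hlam : lam ≠ 0) (f : ℂ → ℂ) (u : ℝ) (ζ : ℂ) :
    lineTransform lam f u (ζ + lam) = lineTransform lam f u ζ := by
  simp only [lineTransform, add_sub_right_comm, periodicKernel_add_period hlam]

lemma exists_lowerWeight_mul_norm_lineTransform_le {ε : ℝ} (hlam : 0 < lam.re) (hε : 0 < ε) :
    ∃ K, 0 ≤ K ∧ ∀ {f : ℂ → ℂ} {u M : ℝ}, DecayBoundOn f (re ⁻¹' {u}) M →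
      ∀ {ζ : ℂ}, ζ.re - u ∈ Icc ε (lam.re - ε) →
        lowerWeight lam ζ * ‖lineTransform lam f u ζ‖ ≤ K * M := by
  obtain ⟨K, hK0, hK⟩ := exists_lowerWeight_mul_norm_integrand_le hlam hε
  refine ⟨‖lam‖⁻¹ * (K * Real.pi), by positivity, fun {f u M} hf {ζ} hζ => ?_⟩
  have hint : ‖∫ y : ℝ, f (u + y * I) * periodicKernel lam (ζ - (u + y * I))‖ ≤
      ∫ y : ℝ, (lowerWeight lam ζ)⁻¹ * (K * M) * (1 + y ^ 2)⁻¹ := by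
    refine norm_integral_le_of_norm_le (integrable_inv_one_add_sq.const_mul _)
      (ae_of_all _ fun y => ?_)
    rw [mul_assoc, le_inv_mul_iff₀ lowerWeight_pos]
    exact hK hf hζ y
  rw [integral_const_mul, integral_univ_inv_one_add_sq, mul_assoc,
    le_inv_mul_iff₀ lowerWeight_pos] at hint
  calc lowerWeight lam ζ * ‖lineTransform lam f u ζ‖
      = ‖lam‖⁻¹ * (lowerWeight lam ζ *
          ‖∫ y : ℝ, f (u + y * I) * periodicKernel lam (ζ - (u + y * I))‖) := by
        rw [lineTransform, norm_mul, norm_div, norm_I, one_div]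
        ring
    _ ≤ ‖lam‖⁻¹ * (K * M * Real.pi) := by gcongr
    _ = ‖lam‖⁻¹ * (K * Real.pi) * M := by ring

lemma continuous_verticalLine {a b u : ℝ} (hf : ContinuousOn f (re ⁻¹' Icc a b))
    (hu : u ∈ Icc a b) : Continuous fun y : ℝ => f (u + y * I) :=
  hf.comp_continuous (by fun_prop) fun y => by simpa using hu

lemma preimage_re_singleton_subset {u : ℝ} {J : Set ℝ} (hu : u ∈ J) : re ⁻¹' {u} ⊆ re ⁻¹' J :=
  preimage_mono (singleton_subset_iff.2 hu)

lemma differentiableOn_mul_periodicKernel {a b : ℝ} (hf : DifferentiableOn ℂ f (re ⁻¹' Icc a b))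
    (ha : ζ.re - a < lam.re) (hb : b - ζ.re < lam.re) :
    DifferentiableOn ℂ (fun z => f z * periodicKernel lam (ζ - z)) (re ⁻¹' Icc a b \ {ζ}) := by
  refine (hf.mono sdiff_subset).mul fun z hz => ?_
  refine (DifferentiableAt.comp (g := periodicKernel lam) z (differentiableAt_periodicKernel ?_ ?_)
    (by fun_prop)).differentiableWithinAt
  · exact sub_ne_zero.2 (Ne.symm hz.2)
  · exact abs_lt.2 ⟨by simp; linarith [hz.1.2], by simp; linarith [hz.1.1]⟩

lemma lineTransform_eq_of_re_lt {u₁ u₂ : ℝ} (hu : u₁ ≤ u₂)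
    (hf : DifferentiableOn ℂ f (re ⁻¹' Icc u₁ u₂)) (hM : DecayBoundOn f (re ⁻¹' Icc u₁ u₂) M)
    (h₂ : u₂ < ζ.re) (h₁ : ζ.re - u₁ < lam.re) :
    lineTransform lam f u₂ ζ = lineTransform lam f u₁ ζ := by
  have hlam : 0 < lam.re := by linarith
  have hint {u : ℝ} (hu : u ∈ Icc u₁ u₂) := integrable_mul_periodicKernel
    (continuous_verticalLine hf.continuousOn hu) (hM.mono (preimage_re_singleton_subset hu))
    (show ζ.re - u ∈ Ioo 0 lam.re from ⟨by linarith [hu.2], by linarith [hu.1]⟩)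
  have hζ : ζ ∉ re ⁻¹' Icc u₁ u₂ := fun h => h₂.not_ge h.2
  have hdiff := differentiableOn_mul_periodicKernel hf h₁ (by linarith)
  rw [sdiff_singleton_eq_self hζ] at hdiff
  exact congrArg (I / lam * ·) (integral_verticalLine_eq hu hdiff
    (tendsto_mul_periodicKernel_stripEnds hlam hM ζ) (hint ⟨le_rfl, hu⟩) (hint ⟨hu, le_rfl⟩))

lemma lineTransform_eq {a b u₁ u₂ : ℝ} (hf : DifferentiableOn ℂ f (re ⁻¹' Ioo a b))
    (hM : DecayBoundOn f (re ⁻¹' Ioo a b) M) (h₁ : u₁ ∈ Ioo a b) (h₂ : u₂ ∈ Ioo a b)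
    (hζ₁ : ζ.re - u₁ ∈ Ioo 0 lam.re) (hζ₂ : ζ.re - u₂ ∈ Ioo 0 lam.re) :
    lineTransform lam f u₁ ζ = lineTransform lam f u₂ ζ := by
  wlog hu : u₁ ≤ u₂ generalizing u₁ u₂
  · exact (this h₂ h₁ hζ₂ hζ₁ (le_of_not_ge hu)).symm
  have hsub : re ⁻¹' Icc u₁ u₂ ⊆ re ⁻¹' Ioo a b := preimage_mono (Icc_subset_Ioo h₁.1 h₂.2)
  exact (lineTransform_eq_of_re_lt hu (hf.mono hsub) (hM.mono hsub) (sub_pos.1 hζ₂.1) hζ₁.2).symm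

lemma tendsto_sub_mul_mul_periodicKernel (hlam : lam ≠ 0) (hf : ContinuousAt f ζ) :
    Tendsto (fun z => (z - ζ) * (f z * periodicKernel lam (ζ - z))) (𝓝[≠] ζ)
      (𝓝 (f ζ * (lam / (2 * Real.pi * I)))) := by
  have hsub : Tendsto (fun z => ζ - z) (𝓝[≠] ζ) (𝓝[≠] 0) := by
    refine tendsto_nhdsWithin_of_tendsto_nhds_of_eventually_within _ ?_ ?_
    · exact ((continuous_const.sub continuous_id).tendsto' ζ 0 (sub_self ζ)).mono_left
        nhdsWithin_le_nhds
    · exact eventually_mem_nhdsWithin.mono fun z hz => sub_ne_zero.2 (Ne.symm hz)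
  have hres := (hf.mono_left nhdsWithin_le_nhds).mul
    ((tendsto_mul_periodicKernel hlam).comp hsub).neg
  rw [← neg_div, neg_neg] at hres
  refine hres.congr fun z => ?_
  simp only [Function.comp_apply]
  ring

lemma lineTransform_sub_eq {u₁ u₂ : ℝ} (hf : DifferentiableOn ℂ f (re ⁻¹' Icc u₁ u₂))
    (hM : DecayBoundOn f (re ⁻¹' Icc u₁ u₂) M) (hζ₁ : ζ.re - u₁ ∈ Ioo 0 lam.re)
    (hζ₂ : u₂ - ζ.re ∈ Ioo 0 lam.re) :
    lineTransform lam f u₂ ζ - lineTransform lam f u₁ ζ = f ζ := by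
  have hlampos : 0 < lam.re := hζ₁.1.trans hζ₁.2
  have hlam : lam ≠ 0 := ne_of_apply_ne re hlampos.ne'
  have h₁ : u₁ < ζ.re := sub_pos.1 hζ₁.1
  have h₂ : ζ.re < u₂ := sub_pos.1 hζ₂.1
  have hcont {u : ℝ} (hu : u ∈ Icc u₁ u₂) := continuous_verticalLine hf.continuousOn hu
  have hline {u : ℝ} (hu : u ∈ Icc u₁ u₂) := hM.mono (preimage_re_singleton_subset hu)
  have hmem₁ : u₁ ∈ Icc u₁ u₂ := ⟨le_rfl, (h₁.trans h₂).le⟩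
  have hmem₂ : u₂ ∈ Icc u₁ u₂ := ⟨(h₁.trans h₂).le, le_rfl⟩
  have hint₁ := integrable_mul_periodicKernel (hcont hmem₁) (hline hmem₁) hζ₁
  have hint₂ := integrable_mul_periodicKernel (lam := lam) (ζ := ζ + lam) (hcont hmem₂)
    (hline hmem₂) ⟨by simp; linarith [hζ₂.2], by simp; linarith [hζ₂.1]⟩
  simp only [add_sub_right_comm, periodicKernel_add_period hlam] at hint₂
  have hfζ : ContinuousAt f ζ := hf.continuousOn.continuousAt
    (continuous_re.continuousAt.preimage_mem_nhds (Icc_mem_nhds h₁ h₂))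
  have hres := integral_verticalLine_sub_eq_residue h₁ h₂
    (differentiableOn_mul_periodicKernel hf hζ₁.2 hζ₂.2)
    (tendsto_sub_mul_mul_periodicKernel hlam hfζ)
    (tendsto_mul_periodicKernel_stripEnds hlampos hM ζ) hint₁ hint₂
  rw [lineTransform, lineTransform, ← mul_sub, hres]
  have hpi : (Real.pi : ℂ) ≠ 0 := ofReal_ne_zero.2 Real.pi_ne_zero
  field_simp

end LineTransform

/-! ### Holomorphic dependence of integrals on a parameter -/

section ParametricIntegral

variable {α 𝕜 E G : Type*} [MeasurableSpace α] {μ : Measure α}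

lemma aestronglyMeasurable_clm_of_apply [NontriviallyNormedField 𝕜] [CompleteSpace 𝕜]
    [NormedAddCommGroup E] [NormedSpace 𝕜 E] [FiniteDimensional 𝕜 E] [NormedAddCommGroup G]
    [NormedSpace 𝕜 G] {L : α → E →L[𝕜] G} (hL : ∀ v, AEStronglyMeasurable (fun y => L y v) μ) :
    AEStronglyMeasurable L μ := by
  let e := Module.finBasis 𝕜 E
  have hsum (y : α) : L y = ∑ i, ContinuousLinearMap.smulRightL 𝕜 E G
      (e.coord i).toContinuousLinearMap (L y (e i)) := by
    ext v
    conv_lhs => rw [← e.sum_repr v, map_sum]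
    simp
  rw [funext hsum]
  exact Finset.aestronglyMeasurable_fun_sum _ fun i _ =>
    (ContinuousLinearMap.continuous _).comp_aestronglyMeasurable (hL (e i))

lemma aestronglyMeasurable_fderiv_param [NontriviallyNormedField 𝕜] [CompleteSpace 𝕜]
    [NormedAddCommGroup E] [NormedSpace 𝕜 E] [FiniteDimensional 𝕜 E] [NormedAddCommGroup G]
    [NormedSpace 𝕜 G] {F : E → α → G} {p : E}
    (hF : ∀ᶠ p' in 𝓝 p, AEStronglyMeasurable (F p') μ)
    (hd : ∀ y, DifferentiableAt 𝕜 (fun p' => F p' y) p) :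
    AEStronglyMeasurable (fun y => fderiv 𝕜 (fun p' => F p' y) p) μ := by
  refine aestronglyMeasurable_clm_of_apply fun v => ?_
  obtain ⟨c, hc⟩ := NormedField.exists_one_lt_norm 𝕜
  have hpow : Tendsto (fun n : ℕ => ‖c ^ n‖) atTop atTop := by
    simpa only [norm_pow] using tendsto_pow_atTop_atTop_of_one_lt hc
  have hnear : Tendsto (fun n : ℕ => p + (c ^ n)⁻¹ • v) atTop (𝓝 p) := by
    have hinv := tendsto_inv₀_cobounded.comp (tendsto_norm_atTop_iff_cobounded.1 hpow)
    simpa using tendsto_const_nhds.add (hinv.smul_const v)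
  obtain ⟨N, hN⟩ := eventually_atTop.1 (hnear.eventually hF)
  refine aestronglyMeasurable_of_tendsto_ae atTop
    (f := fun n y => c ^ (n + N) • (F (p + (c ^ (n + N))⁻¹ • v) y - F p y)) (fun n => ?_)
    (ae_of_all _ fun y => (hd y).hasFDerivAt.lim v
      (hpow.comp (tendsto_add_atTop_nat N)))
  exact ((hN _ (Nat.le_add_left N n)).sub hF.self_of_nhds).const_smul _

lemma differentiableOn_integral_of_dominated [NormedAddCommGroup E] [NormedSpace ℂ E]
    [FiniteDimensional ℂ E] [NormedAddCommGroup G] [NormedSpace ℂ G] {F : E → α → G} {U : Set E}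
    {bound : α → ℝ} (hU : IsOpen U) (hF : ∀ p ∈ U, AEStronglyMeasurable (F p) μ)
    (hd : ∀ y, DifferentiableOn ℂ (fun p => F p y) U) (hb : ∀ p ∈ U, ∀ y, ‖F p y‖ ≤ bound y)
    (hbound : Integrable bound μ) : DifferentiableOn ℂ (fun p => ∫ y, F p y ∂μ) U := by
  intro p hp
  obtain ⟨r, hr, hball⟩ := Metric.isOpen_iff.1 hU p hp
  have hdiff (y : α) {q : E} (hq : q ∈ U) : DifferentiableAt ℂ (fun q => F q y) q :=
    (hd y).differentiableAt (hU.mem_nhds hq)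
  have hFnear : ∀ᶠ q in 𝓝 p, AEStronglyMeasurable (F q) μ := eventually_of_mem (hU.mem_nhds hp) hF
  have hcauchy (y : α) {q : E} (hq : q ∈ Metric.ball p (r / 2)) :
      ‖fderiv ℂ (fun q => F q y) q‖ ≤ 2 * bound y / (r / 2) := by
    have hsub : Metric.ball q (r / 2) ⊆ U :=
      (Metric.ball_subset_ball' (by linarith [Metric.mem_ball.1 hq])).trans hball
    refine norm_fderiv_le_div_of_mapsTo_ball ((hd y).mono hsub) (fun q' hq' => ?_) (half_pos hr)
    rw [mem_closedBall_iff_norm, two_mul]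
    exact (norm_sub_le _ _).trans (add_le_add (hb _ (hsub hq') y)
      (hb _ (hsub (Metric.mem_ball_self (half_pos hr))) y))
  refine (hasFDerivAt_integral_of_dominated_of_fderiv_le (𝕜 := ℂ)
    (Metric.ball_mem_nhds p (half_pos hr)) hFnear (hbound.mono' (hF p hp) (ae_of_all _ (hb p hp)))
    (aestronglyMeasurable_fderiv_param hFnear fun y => hdiff y hp)
    (ae_of_all _ fun y q hq => hcauchy y hq) ((hbound.const_mul 2).div_const _)
    (ae_of_all _ fun y q hq => (hdiff y ?_).hasFDerivAt)).differentiableAt.differentiableWithinAt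
  exact hball (Metric.ball_subset_ball (half_le_self hr.le) hq)

end ParametricIntegral

/-! ### Logarithmic strips -/

/-- The pairs `(c, ζ)` with `‖c‖ ∈ R` and `re ζ - log ‖c‖ ∈ J`. -/
def logStrip (R J : Set ℝ) : Set (ℂ × ℂ) :=
  {p | ‖p.1‖ ∈ R ∧ p.2.re - Real.log ‖p.1‖ ∈ J}

section LogStrip

variable {R R' J J' : Set ℝ} {c ζ lam : ℂ}

@[simp]
lemma mk_mem_logStrip : (c, ζ) ∈ logStrip R J ↔ ‖c‖ ∈ R ∧ ζ.re - Real.log ‖c‖ ∈ J :=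
  Iff.rfl

lemma logStrip_mono (hR : R ⊆ R') (hJ : J ⊆ J') : logStrip R J ⊆ logStrip R' J' :=
  fun _ hp => ⟨hR hp.1, hJ hp.2⟩

lemma isOpen_logStrip (hR : IsOpen R) (hR0 : R ⊆ Ioi 0) (hJ : IsOpen J) :
    IsOpen (logStrip R J) := by
  have hfst : IsOpen {p : ℂ × ℂ | ‖p.1‖ ∈ R} := hR.preimage (by fun_prop)
  have hcont : ContinuousOn (fun p : ℂ × ℂ => p.2.re - Real.log ‖p.1‖) {p | ‖p.1‖ ∈ R} :=
    ContinuousOn.sub (by fun_prop) (ContinuousOn.log (by fun_prop) fun p hp => (hR0 hp).ne')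
  exact hcont.isOpen_inter_preimage hfst hJ

/-- Scaling the first coordinate and translating the second one realises every nearby value of
`(‖c‖, re ζ - log ‖c‖)`. -/
lemma interior_logStrip (hR0 : R ⊆ Ioi 0) :
    interior (logStrip R J) = logStrip (interior R) (interior J) := by
  refine Subset.antisymm ?_ (interior_maximal (logStrip_mono interior_subset interior_subset)
    (isOpen_logStrip isOpen_interior (interior_subset.trans hR0) isOpen_interior))
  rintro ⟨c, ζ⟩ hp
  have hc : 0 < ‖c‖ := hR0 (interior_subset hp).1
  set x := ζ.re - Real.log ‖c‖ with hx
  let σ : ℝ × ℝ → ℂ × ℂ := fun q =>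
    (((q.1 / ‖c‖ : ℝ) : ℂ) * c, ζ + ((q.2 + Real.log q.1 - ζ.re : ℝ) : ℂ))
  have hσ : ContinuousAt σ (‖c‖, x) := by
    refine ContinuousAt.prodMk (by fun_prop) (ContinuousAt.add (by fun_prop) ?_)
    exact continuous_ofReal.continuousAt.comp
      (((by fun_prop : ContinuousAt Prod.snd (‖c‖, x)).add
        (ContinuousAt.log (by fun_prop) hc.ne')).sub (by fun_prop))
  have hσp : σ (‖c‖, x) = (c, ζ) := by simp [σ, hx, hc.ne']
  have hmem : ∀ᶠ q in 𝓝 (‖c‖, x), q ∈ R ×ˢ J := by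
    filter_upwards [hσ.eventually (hσp ▸ mem_interior_iff_mem_nhds.1 hp),
      continuous_fst.continuousAt.eventually (eventually_gt_nhds hc)] with q hq hq0
    have hnorm : ‖((q.1 / ‖c‖ : ℝ) : ℂ) * c‖ = q.1 := by
      simp [abs_of_pos hq0, hc.ne']
    have hre : (σ q).2.re - Real.log ‖(σ q).1‖ = q.2 := by
      simp only [σ, hnorm, add_re, ofReal_re]
      ring
    exact ⟨hnorm ▸ hq.1, hre ▸ hq.2⟩
  rw [Filter.Eventually, Set.ofPred_mem_eq, prod_mem_nhds_iff] at hmem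
  exact ⟨mem_interior_iff_mem_nhds.2 hmem.1, mem_interior_iff_mem_nhds.2 hmem.2⟩

lemma differentiableOn_of_mem_closure {X G : Type*} [TopologicalSpace X] [NormedAddCommGroup G]
    [NormedSpace ℂ G] [CompleteSpace G] {F : X → ℂ → G} {A : Set X} {x : X} {V : Set ℂ}
    (hV : IsOpen V) (hF : ContinuousOn F.uncurry (insert x A ×ˢ V)) (hx : x ∈ closure A)
    (hd : ∀ a ∈ A, DifferentiableOn ℂ (F a) V) : DifferentiableOn ℂ (F x) V := by
  have : (𝓝[A] x).NeBot := mem_closure_iff_nhdsWithin_neBot.1 hx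
  have hlim : TendstoLocallyUniformlyOn F (F x) (𝓝[A] x) V := by
    refine (tendstoLocallyUniformlyOn_iff_forall_isCompact hV).2 fun K hKV hK u hu => ?_
    obtain ⟨v, hv, hvu⟩ := hK.mem_uniformity_of_prod (hF.mono (prod_mono_right hKV))
      (mem_insert x A) (symm_le_uniformity hu)
    exact eventually_of_mem (nhdsWithin_mono _ (subset_insert x A) hv) hvu
  exact hlim.differentiableOn (eventually_mem_nhdsWithin.mono hd) hV

/-- For `‖c‖ = δ` the slice is the locally uniform limit as `r → 1⁻` of slices at `r * c`,
translated so that they live on the same strip. -/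
lemma differentiableOn_slice {Δ : ℂ × ℂ → ℂ} {δ lo hi : ℝ}
    (hcont : ContinuousOn Δ (logStrip (Ioc 0 δ) (Ioo lo hi)))
    (hdiff : DifferentiableOn ℂ Δ (logStrip (Ioo 0 δ) (Ioo lo hi))) (hc : ‖c‖ ∈ Ioc 0 δ) :
    DifferentiableOn ℂ (fun ζ => Δ (c, ζ))
      (re ⁻¹' Ioo (Real.log ‖c‖ + lo) (Real.log ‖c‖ + hi)) := by
  let γ : ℝ → ℂ → ℂ × ℂ := fun r ζ => ((r : ℂ) * c, ζ + (Real.log r : ℝ))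
  have hγ {r : ℝ} (hr : 0 < r) {ζ : ℂ} {R : Set ℝ} (hR : r * ‖c‖ ∈ R)
      (hζ : ζ.re ∈ Ioo (Real.log ‖c‖ + lo) (Real.log ‖c‖ + hi)) :
      γ r ζ ∈ logStrip R (Ioo lo hi) := by
    refine ⟨by simpa [γ, abs_of_pos hr] using hR, ?_⟩
    simp only [γ, norm_mul, norm_real, Real.norm_of_nonneg hr.le, add_re, ofReal_re,
      Real.log_mul hr.ne' hc.1.ne']
    exact ⟨by linarith [hζ.1], by linarith [hζ.2]⟩
  have hone : (fun ζ => Δ (γ 1 ζ)) = fun ζ => Δ (c, ζ) := by simp [γ]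
  rw [← hone]
  refine differentiableOn_of_mem_closure (F := fun r ζ => Δ (γ r ζ)) (A := Ioo 0 1)
    (isOpen_Ioo.preimage continuous_re) ?_ (by simp [closure_Ioo]) fun r hr => ?_
  · have hq0 {q : ℝ × ℂ} (hq : q.1 ∈ insert 1 (Ioo 0 1)) : q.1 ∈ Ioc 0 1 :=
      insert_subset (right_mem_Ioc.2 one_pos) Ioo_subset_Ioc_self hq
    refine hcont.comp (f := Function.uncurry γ) (fun q hq => ?_) fun q hq => ?_
    · have hlog := ContinuousAt.log (f := fun q : ℝ × ℂ => q.1) (a := q) (by fun_prop)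
        (hq0 hq.1).1.ne'
      refine (ContinuousAt.prodMk (by fun_prop) ?_).continuousWithinAt
      exact (continuousAt_snd.add (continuous_ofReal.continuousAt.comp hlog))
    · refine hγ (hq0 hq.1).1 ⟨mul_pos (hq0 hq.1).1 hc.1, ?_⟩ hq.2
      exact (mul_le_of_le_one_left hc.1.le (hq0 hq.1).2).trans hc.2
  · refine hdiff.comp (by fun_prop) fun ζ hζ => hγ hr.1 ⟨mul_pos hr.1 hc.1, ?_⟩ hζ
    exact (mul_lt_of_lt_one_left hc.1 hr.2).trans_le hc.2

end LogStrip

/-! ### Transforms of the slices of a function on a logarithmic strip -/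

/-- `Δ` is holomorphic on `logStrip (Ioc 0 δ) (Icc lo hi)`, and `(1 + ‖ζ‖) * ‖Δ (c, ζ)‖` decays
quadratically in `im ζ` with constant `M`. -/
structure IsAdmissible (Δ : ℂ × ℂ → ℂ) (δ lo hi M : ℝ) : Prop where
  continuousOn : ContinuousOn Δ (logStrip (Ioc 0 δ) (Icc lo hi))
  differentiableOn : DifferentiableOn ℂ Δ (logStrip (Ioo 0 δ) (Ioo lo hi))
  decay : ∀ c, DecayBoundOn (fun η => Δ (c, η)) {η | (c, η) ∈ logStrip (Ioc 0 δ) (Icc lo hi)} M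

/-- The pairs `(c, ζ)` for which the line `re = u` lies in the slice of `logStrip R J` over `c`
and `re ζ - u ∈ K`. -/
def lineDomain (R J K : Set ℝ) (u : ℝ) : Set (ℂ × ℂ) :=
  {p | (p.1, (u : ℂ)) ∈ logStrip R J ∧ p.2.re - u ∈ K}

section LineDomain

variable {R J K : Set ℝ} {u δ lo hi M : ℝ} {p : ℂ × ℂ} {lam : ℂ} {Δ : ℂ × ℂ → ℂ}

lemma isOpen_lineDomain (hR : IsOpen R) (hR0 : R ⊆ Ioi 0) (hJ : IsOpen J) (hK : IsOpen K)
    (u : ℝ) : IsOpen (lineDomain R J K u) :=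
  ((isOpen_logStrip hR hR0 hJ).preimage (by fun_prop)).inter (hK.preimage (by fun_prop))

lemma mk_line_mem_logStrip (hp : (p.1, (u : ℂ)) ∈ logStrip R J) (y : ℝ) :
    (p.1, u + y * I) ∈ logStrip R J := by
  simpa using hp

lemma continuous_slice_mul_periodicKernel (hcont : ContinuousOn Δ (logStrip R J))
    (hp : p ∈ lineDomain R J (Ioo 0 lam.re) u) :
    Continuous fun y : ℝ => Δ (p.1, u + y * I) * periodicKernel lam (p.2 - (u + y * I)) :=
  continuous_mul_periodicKernel_line (f := fun η => Δ (p.1, η))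
    (hcont.comp_continuous (by fun_prop) (mk_line_mem_logStrip hp.1)) hp.2

lemma differentiableAt_periodicKernel_line (hp : p.2.re - u ∈ Ioo 0 lam.re) (y : ℝ) :
    DifferentiableAt ℂ (fun p : ℂ × ℂ => periodicKernel lam (p.2 - (u + y * I))) p := by
  refine DifferentiableAt.comp (g := periodicKernel lam) p
    (differentiableAt_periodicKernel (fun h => ?_) ?_) (by fun_prop)
  · exact hp.1.ne' (by simpa using congrArg re h)
  · simpa [abs_of_pos hp.1] using hp.2

lemma decayBoundOn_line
    (hdecay : ∀ c, DecayBoundOn (fun η => Δ (c, η)) {η | (c, η) ∈ logStrip R J} M)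
    (hp : (p.1, (u : ℂ)) ∈ logStrip R J) :
    DecayBoundOn (fun η => Δ (p.1, η)) (re ⁻¹' {u}) M :=
  (hdecay p.1).mono fun η (hη : η.re = u) => by simpa [hη] using hp

lemma continuousOn_lineTransform (hcont : ContinuousOn Δ (logStrip R J))
    (hdecay : ∀ c, DecayBoundOn (fun η => Δ (c, η)) {η | (c, η) ∈ logStrip R J} M) (u : ℝ) :
    ContinuousOn (fun p : ℂ × ℂ => lineTransform lam (fun η => Δ (p.1, η)) u p.2)
      (lineDomain R J (Ioo 0 lam.re) u) := by
  intro p hp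
  obtain ⟨ε, hε, hεp⟩ := exists_between (lt_min hp.2.1 (sub_pos.2 hp.2.2))
  obtain ⟨K, -, hK⟩ := exists_lowerWeight_mul_norm_integrand_le (hp.2.1.trans hp.2.2) hε
  have hre : ∀ᶠ q : ℂ × ℂ in 𝓝[lineDomain R J (Ioo 0 lam.re) u] p,
      q.2.re - u ∈ Icc ε (lam.re - ε) := by
    refine nhdsWithin_le_nhds ((by fun_prop : Continuous fun q : ℂ × ℂ => q.2.re - u).continuousAt
      (Icc_mem_nhds (hεp.trans_le (min_le_left _ _)) ?_))
    exact lt_sub_comm.1 (hεp.trans_le (min_le_right _ _))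
  refine continuousWithinAt_const.mul (continuousWithinAt_of_dominated
    (bound := fun y => K * M * (1 + y ^ 2)⁻¹) ?_ ?_ (integrable_inv_one_add_sq.const_mul _)
    (ae_of_all _ fun y => ?_))
  · filter_upwards [self_mem_nhdsWithin] with q hq
    exact (continuous_slice_mul_periodicKernel hcont hq).aestronglyMeasurable
  · filter_upwards [self_mem_nhdsWithin, hre] with q hq hqε
    exact ae_of_all _ fun y => (le_mul_of_one_le_left (norm_nonneg _) one_le_lowerWeight).trans
      (hK (decayBoundOn_line hdecay hq.1) hqε y)
  · refine ((hcont _ (mk_line_mem_logStrip hp.1 y)).comp (f := fun q : ℂ × ℂ => (q.1, u + y * I))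
      (by fun_prop) fun q hq => mk_line_mem_logStrip hq.1 y).mul ?_
    exact (differentiableAt_periodicKernel_line hp.2 y).continuousAt.continuousWithinAt

lemma differentiableOn_lineTransform (hR : IsOpen R) (hR0 : R ⊆ Ioi 0) (hJ : IsOpen J)
    (hdiff : DifferentiableOn ℂ Δ (logStrip R J))
    (hdecay : ∀ c, DecayBoundOn (fun η => Δ (c, η)) {η | (c, η) ∈ logStrip R J} M) (u : ℝ) :
    DifferentiableOn ℂ (fun p : ℂ × ℂ => lineTransform lam (fun η => Δ (p.1, η)) u p.2)
      (lineDomain R J (Ioo 0 lam.re) u) := by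
  intro p hp
  obtain ⟨ε, hε, hεp⟩ := exists_between (lt_min hp.2.1 (sub_pos.2 hp.2.2))
  obtain ⟨K, -, hK⟩ := exists_lowerWeight_mul_norm_integrand_le (hp.2.1.trans hp.2.2) hε
  have hopen := isOpen_lineDomain hR hR0 hJ (isOpen_Ioo (a := ε) (b := lam.re - ε)) u
  have hpε : p ∈ lineDomain R J (Ioo ε (lam.re - ε)) u :=
    ⟨hp.1, hεp.trans_le (min_le_left _ _), lt_sub_comm.1 (hεp.trans_le (min_le_right _ _))⟩
  have hsub : Ioo ε (lam.re - ε) ⊆ Ioo 0 lam.re := Ioo_subset_Ioo hε.le (sub_le_self _ hε.le)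
  refine ((differentiableOn_integral_of_dominated hopen (fun q hq => ?_) (fun y q hq => ?_)
    (fun q hq y => ?_) (integrable_inv_one_add_sq.const_mul (K * M))).differentiableAt
    (hopen.mem_nhds hpε)).const_mul _ |>.differentiableWithinAt
  · exact (continuous_slice_mul_periodicKernel hdiff.continuousOn
      ⟨hq.1, hsub hq.2⟩).aestronglyMeasurable
  · refine (DifferentiableAt.mul ?_ (differentiableAt_periodicKernel_line (hsub hq.2) y)
      ).differentiableWithinAt
    exact (hdiff.differentiableAt ((isOpen_logStrip hR hR0 hJ).mem_nhds
      (mk_line_mem_logStrip hq.1 y))).comp (f := fun q : ℂ × ℂ => (q.1, u + y * I)) q (by fun_prop)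
  · exact (le_mul_of_one_le_left (norm_nonneg _) one_le_lowerWeight).trans
      (hK (decayBoundOn_line hdecay hq.1) (Ioo_subset_Icc_self hq.2) y)

end LineDomain

/-! ### The Cauchy solution -/

/-- The position `re η - log ‖c‖` of the contour used at `re ζ - log ‖c‖ = x`: the affine map from
`[lo, hi + re lam]` onto `[lo, hi]`, chosen so that its distance to `x` lies in `[0, re lam]`. -/
noncomputable def contourShift (lam : ℂ) (lo hi x : ℝ) : ℝ :=
  lo + (x - lo) * (hi - lo) / (hi - lo + lam.re)

/-- The Cauchy transform of the slice of `Δ` along the contour given by `contourShift`; it solves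
the difference equation away from the edges of the strip. -/
noncomputable def cauchySolution (lam : ℂ) (Δ : ℂ × ℂ → ℂ) (lo hi : ℝ) (p : ℂ × ℂ) : ℂ :=
  lineTransform lam (fun η => Δ (p.1, η))
    (Real.log ‖p.1‖ + contourShift lam lo hi (p.2.re - Real.log ‖p.1‖)) p.2

section CauchySolution

variable {δ lo hi M x : ℝ} {p : ℂ × ℂ} {lam : ℂ} {Δ : ℂ × ℂ → ℂ}

lemma sub_contourShift (hlam : 0 < lam.re) (hlo : lo < hi) (x : ℝ) :
    x - contourShift lam lo hi x = (x - lo) * lam.re / (hi - lo + lam.re) := by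
  have : hi - lo + lam.re ≠ 0 := by linarith
  rw [contourShift]
  field_simp
  ring

lemma contourShift_mem_Ioo (hlam : 0 < lam.re) (hlo : lo < hi) (hx : x ∈ Ioo lo (hi + lam.re)) :
    contourShift lam lo hi x ∈ Ioo lo hi := by
  have hsum : 0 < hi - lo + lam.re := by linarith
  refine ⟨lt_add_of_pos_right _ (div_pos (mul_pos (sub_pos.2 hx.1) (sub_pos.2 hlo)) hsum), ?_⟩
  rw [contourShift, ← lt_sub_iff_add_lt', div_lt_iff₀ hsum, mul_comm (hi - lo)]
  exact mul_lt_mul_of_pos_right (by linarith [hx.2]) (sub_pos.2 hlo)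

lemma sub_contourShift_mem_Icc {ρ : ℝ} (hlam : 0 < lam.re) (hlo : lo < hi)
    (hx : x ∈ Icc (lo + ρ) (hi + lam.re - ρ)) :
    x - contourShift lam lo hi x ∈
      Icc (ρ * lam.re / (hi - lo + lam.re)) (lam.re - ρ * lam.re / (hi - lo + lam.re)) := by
  have hsum : 0 < hi - lo + lam.re := by linarith
  rw [sub_contourShift hlam hlo]
  constructor
  · gcongr
    linarith [hx.1]
  · rw [le_sub_iff_add_le, ← add_div, div_le_iff₀ hsum, ← add_mul, mul_comm]
    exact mul_le_mul_of_nonneg_left (by linarith [hx.2]) hlam.le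

lemma sub_contourShift_mem_Ioo (hlam : 0 < lam.re) (hlo : lo < hi)
    (hx : x ∈ Ioo lo (hi + lam.re)) : x - contourShift lam lo hi x ∈ Ioo 0 lam.re := by
  obtain ⟨ρ, hρ, hρx⟩ := exists_between (lt_min (sub_pos.2 hx.1) (sub_pos.2 hx.2))
  have hmem := sub_contourShift_mem_Icc (x := x) (ρ := ρ) hlam hlo
    ⟨by linarith [min_le_left (x - lo) (hi + lam.re - x)],
      by linarith [min_le_right (x - lo) (hi + lam.re - x)]⟩
  have hpos : 0 < ρ * lam.re / (hi - lo + lam.re) := by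
    have : 0 < hi - lo + lam.re := by linarith
    positivity
  exact Icc_subset_Ioo hpos (sub_lt_self _ hpos) hmem

lemma mem_lineDomain_contourShift {R : Set ℝ} (hlam : 0 < lam.re) (hlo : lo < hi)
    (hp : p ∈ logStrip R (Ioo lo (hi + lam.re))) :
    p ∈ lineDomain R (Ioo lo hi) (Ioo 0 lam.re)
      (Real.log ‖p.1‖ + contourShift lam lo hi (p.2.re - Real.log ‖p.1‖)) := by
  refine ⟨⟨hp.1, ?_⟩, ?_⟩
  · simpa using contourShift_mem_Ioo hlam hlo hp.2
  · simpa only [sub_sub] using sub_contourShift_mem_Ioo hlam hlo hp.2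

lemma mem_logStrip_of_mem_lineDomain {R : Set ℝ} {u : ℝ}
    (hp : p ∈ lineDomain R (Ioo lo hi) (Ioo 0 lam.re) u) :
    p ∈ logStrip R (Ioo lo (hi + lam.re)) := by
  have h := hp.1.2
  simp only [ofReal_re] at h
  exact ⟨hp.1.1, by linarith [h.1, hp.2.1], by linarith [h.2, hp.2.2]⟩

lemma IsAdmissible.decay_Ioo (hΔ : IsAdmissible Δ δ lo hi M) {R : Set ℝ} (hR : R ⊆ Ioc 0 δ)
    (c : ℂ) : DecayBoundOn (fun η => Δ (c, η)) {η | (c, η) ∈ logStrip R (Ioo lo hi)} M :=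
  (hΔ.decay c).mono fun _ hη => logStrip_mono hR Ioo_subset_Icc_self hη

lemma IsAdmissible.continuousOn_Ioo (hΔ : IsAdmissible Δ δ lo hi M) :
    ContinuousOn Δ (logStrip (Ioc 0 δ) (Ioo lo hi)) :=
  hΔ.continuousOn.mono (logStrip_mono Subset.rfl Ioo_subset_Icc_self)

lemma IsAdmissible.differentiableOn_slice (hΔ : IsAdmissible Δ δ lo hi M) {c : ℂ}
    (hc : ‖c‖ ∈ Ioc 0 δ) : DifferentiableOn ℂ (fun η => Δ (c, η))
      (re ⁻¹' Ioo (Real.log ‖c‖ + lo) (Real.log ‖c‖ + hi)) :=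
  StripDifference.differentiableOn_slice hΔ.continuousOn_Ioo hΔ.differentiableOn hc

lemma IsAdmissible.decay_slice (hΔ : IsAdmissible Δ δ lo hi M) {c : ℂ} (hc : ‖c‖ ∈ Ioc 0 δ) :
    DecayBoundOn (fun η => Δ (c, η)) (re ⁻¹' Ioo (Real.log ‖c‖ + lo) (Real.log ‖c‖ + hi)) M :=
  (hΔ.decay c).mono fun _ hη => ⟨hc, by linarith [hη.1], by linarith [hη.2]⟩

lemma cauchySolution_eq (hlam : 0 < lam.re) (hlo : lo < hi) (hΔ : IsAdmissible Δ δ lo hi M)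
    {u : ℝ} (hp : p ∈ lineDomain (Ioc 0 δ) (Ioo lo hi) (Ioo 0 lam.re) u) :
    cauchySolution lam Δ lo hi p = lineTransform lam (fun η => Δ (p.1, η)) u p.2 := by
  have hline {v : ℝ} (hv : p ∈ lineDomain (Ioc 0 δ) (Ioo lo hi) (Ioo 0 lam.re) v) :
      v ∈ Ioo (Real.log ‖p.1‖ + lo) (Real.log ‖p.1‖ + hi) := by
    have h := hv.1.2
    simp only [ofReal_re] at h
    exact ⟨by linarith [h.1], by linarith [h.2]⟩
  have hshift := mem_lineDomain_contourShift hlam hlo (mem_logStrip_of_mem_lineDomain hp)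
  exact lineTransform_eq (hΔ.differentiableOn_slice hp.1.1) (hΔ.decay_slice hp.1.1)
    (hline hshift) (hline hp) hshift.2 hp.2

lemma continuousOn_cauchySolution (hlam : 0 < lam.re) (hlo : lo < hi)
    (hΔ : IsAdmissible Δ δ lo hi M) :
    ContinuousOn (cauchySolution lam Δ lo hi) (logStrip (Ioc 0 δ) (Ioo lo (hi + lam.re))) := by
  intro p hp
  have hpu := mem_lineDomain_contourShift hlam hlo hp
  set u := Real.log ‖p.1‖ + contourShift lam lo hi (p.2.re - Real.log ‖p.1‖)
  have hnhds : lineDomain (Ioc 0 δ) (Ioo lo hi) (Ioo 0 lam.re) u ∈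
      𝓝[logStrip (Ioc 0 δ) (Ioo lo (hi + lam.re))] p := by
    filter_upwards [self_mem_nhdsWithin, nhdsWithin_le_nhds ((isOpen_lineDomain isOpen_Ioi
      Subset.rfl isOpen_Ioo isOpen_Ioo u).mem_nhds ⟨⟨hpu.1.1.1, hpu.1.2⟩, hpu.2⟩)] with q hq hqu
    exact ⟨⟨hq.1, hqu.1.2⟩, hqu.2⟩
  exact ((continuousOn_lineTransform hΔ.continuousOn_Ioo (hΔ.decay_Ioo Subset.rfl) u p
    hpu).congr (fun q hq => cauchySolution_eq hlam hlo hΔ hq)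
    (cauchySolution_eq hlam hlo hΔ hpu)).mono_of_mem_nhdsWithin hnhds

lemma differentiableOn_cauchySolution (hlam : 0 < lam.re) (hlo : lo < hi)
    (hΔ : IsAdmissible Δ δ lo hi M) :
    DifferentiableOn ℂ (cauchySolution lam Δ lo hi)
      (logStrip (Ioo 0 δ) (Ioo lo (hi + lam.re))) := by
  intro p hp
  have hpu := mem_lineDomain_contourShift hlam hlo hp
  set u := Real.log ‖p.1‖ + contourShift lam lo hi (p.2.re - Real.log ‖p.1‖)
  have hdiff := differentiableOn_lineTransform (lam := lam) isOpen_Ioo Ioo_subset_Ioi_self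
    isOpen_Ioo hΔ.differentiableOn (hΔ.decay_Ioo Ioo_subset_Ioc_self) u
  refine ((hdiff.congr fun q hq => ?_).differentiableAt ?_).differentiableWithinAt
  · exact cauchySolution_eq hlam hlo hΔ ⟨⟨Ioo_subset_Ioc_self hq.1.1, hq.1.2⟩, hq.2⟩
  · exact (isOpen_lineDomain isOpen_Ioo Ioo_subset_Ioi_self isOpen_Ioo isOpen_Ioo u).mem_nhds hpu

lemma cauchySolution_add_period_sub (hlam : 0 < lam.re) (hlo : lo < hi)
    (hΔ : IsAdmissible Δ δ lo hi M) (hp : p ∈ logStrip (Ioc 0 δ) (Ioo lo hi)) :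
    cauchySolution lam Δ lo hi (p.1, p.2 + lam) - cauchySolution lam Δ lo hi p = Δ p := by
  have hlam0 : lam ≠ 0 := ne_of_apply_ne re hlam.ne'
  obtain ⟨hc, hp₁, hp₂⟩ := hp
  obtain ⟨ε, hε, hεp⟩ := exists_between (lt_min hlam (lt_min (sub_pos.2 hp₁) (sub_pos.2 hp₂)))
  simp only [lt_min_iff] at hεp
  have hright : (p.1, p.2 + lam) ∈
      lineDomain (Ioc 0 δ) (Ioo lo hi) (Ioo 0 lam.re) (p.2.re + ε) := by
    refine ⟨⟨hc, ?_⟩, ?_⟩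
    · constructor <;> simp only [ofReal_re] <;> linarith
    · constructor <;> simp only [add_re] <;> linarith
  have hleft : p ∈ lineDomain (Ioc 0 δ) (Ioo lo hi) (Ioo 0 lam.re) (p.2.re - ε) := by
    refine ⟨⟨hc, ?_⟩, ?_⟩
    · constructor <;> simp only [ofReal_re] <;> linarith
    · constructor <;> linarith
  have hsub : re ⁻¹' Icc (p.2.re - ε) (p.2.re + ε) ⊆
      re ⁻¹' Ioo (Real.log ‖p.1‖ + lo) (Real.log ‖p.1‖ + hi) :=
    preimage_mono (Icc_subset_Ioo (by linarith) (by linarith))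
  rw [cauchySolution_eq hlam hlo hΔ hright, cauchySolution_eq hlam hlo hΔ hleft,
    lineTransform_add_period hlam0]
  exact lineTransform_sub_eq ((hΔ.differentiableOn_slice hc).mono hsub)
    ((hΔ.decay_slice hc).mono hsub) hleft.2 ⟨by linarith, by linarith⟩

lemma exists_lowerWeight_mul_norm_cauchySolution_le {ρ : ℝ} (hlam : 0 < lam.re) (hlo : lo < hi)
    (hρ : 0 < ρ) : ∃ K, 0 ≤ K ∧ ∀ {Δ : ℂ × ℂ → ℂ} {δ M : ℝ}, IsAdmissible Δ δ lo hi M →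
      ∀ p ∈ logStrip (Ioc 0 δ) (Icc (lo + ρ) (hi + lam.re - ρ)),
        lowerWeight lam p.2 * ‖cauchySolution lam Δ lo hi p‖ ≤ K * M := by
  have hε : 0 < ρ * lam.re / (hi - lo + lam.re) := by
    have : 0 < hi - lo + lam.re := by linarith
    positivity
  obtain ⟨K, hK0, hK⟩ := exists_lowerWeight_mul_norm_lineTransform_le hlam hε
  refine ⟨K, hK0, fun {Δ δ M} hΔ p hp => ?_⟩
  have hp' : p ∈ logStrip (Ioc 0 δ) (Ioo lo (hi + lam.re)) :=
    logStrip_mono Subset.rfl (Icc_subset_Ioo (by linarith) (by linarith)) hp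
  refine hK (decayBoundOn_line (hΔ.decay_Ioo Subset.rfl)
    (mem_lineDomain_contourShift hlam hlo hp').1) ?_
  simpa only [sub_sub] using sub_contourShift_mem_Icc hlam hlo hp.2

end CauchySolution

/-! ### Extension to the closed strip -/

/-- The extension of `cauchySolution` to the edges of the closed strip, where the contour would
leave the domain of `Δ`, by means of the difference equation. -/
noncomputable def stripSolution (lam : ℂ) (Δ : ℂ × ℂ → ℂ) (lo hi : ℝ) (p : ℂ × ℂ) : ℂ :=
  if p.2.re - Real.log ‖p.1‖ ≤ lo then cauchySolution lam Δ lo hi (p.1, p.2 + lam) - Δ p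
  else if hi + lam.re ≤ p.2.re - Real.log ‖p.1‖ then
    cauchySolution lam Δ lo hi (p.1, p.2 - lam) + Δ (p.1, p.2 - lam)
  else cauchySolution lam Δ lo hi p

section StripSolution

variable {δ lo hi M : ℝ} {p : ℂ × ℂ} {lam : ℂ} {Δ : ℂ × ℂ → ℂ}

lemma add_period_mem_logStrip {R J J' : Set ℝ} (hp : p ∈ logStrip R J)
    (hJ : ∀ x ∈ J, x + lam.re ∈ J') : (p.1, p.2 + lam) ∈ logStrip R J' :=
  ⟨hp.1, by simpa only [add_re, add_sub_right_comm] using hJ _ hp.2⟩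

lemma sub_period_mem_logStrip {R J J' : Set ℝ} (hp : p ∈ logStrip R J)
    (hJ : ∀ x ∈ J, x - lam.re ∈ J') : (p.1, p.2 - lam) ∈ logStrip R J' :=
  ⟨hp.1, by simpa only [sub_re, sub_right_comm] using hJ _ hp.2⟩

lemma stripSolution_of_mem_Ioo (hp : p.2.re - Real.log ‖p.1‖ ∈ Ioo lo (hi + lam.re)) :
    stripSolution lam Δ lo hi p = cauchySolution lam Δ lo hi p := by
  rw [stripSolution, if_neg hp.1.not_ge, if_neg hp.2.not_ge]

lemma stripSolution_of_lt (hlam : 0 < lam.re) (hlo : lo < hi) (hΔ : IsAdmissible Δ δ lo hi M)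
    (hp : p ∈ logStrip (Ioc 0 δ) (Iio hi)) :
    stripSolution lam Δ lo hi p = cauchySolution lam Δ lo hi (p.1, p.2 + lam) - Δ p := by
  rcases le_or_gt (p.2.re - Real.log ‖p.1‖) lo with h | h
  · rw [stripSolution, if_pos h]
  · rw [stripSolution_of_mem_Ioo ⟨h, hp.2.trans (lt_add_of_pos_right _ hlam)⟩,
      ← cauchySolution_add_period_sub hlam hlo hΔ ⟨hp.1, h, hp.2⟩, sub_sub_cancel]

lemma stripSolution_of_gt (hlam : 0 < lam.re) (hlo : lo < hi) (hΔ : IsAdmissible Δ δ lo hi M)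
    (hp : p ∈ logStrip (Ioc 0 δ) (Ioi (lo + lam.re))) :
    stripSolution lam Δ lo hi p =
      cauchySolution lam Δ lo hi (p.1, p.2 - lam) + Δ (p.1, p.2 - lam) := by
  have hlop : lo < p.2.re - Real.log ‖p.1‖ := (lt_add_of_pos_right _ hlam).trans hp.2
  rcases le_or_gt (hi + lam.re) (p.2.re - Real.log ‖p.1‖) with h | h
  · rw [stripSolution, if_neg hlop.not_ge, if_pos h]
  · have hmem : (p.1, p.2 - lam) ∈ logStrip (Ioc 0 δ) (Ioo lo hi) :=
      sub_period_mem_logStrip (J := Ioo (lo + lam.re) (hi + lam.re)) ⟨hp.1, hp.2, h⟩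
        fun x hx => ⟨by linarith [hx.1], by linarith [hx.2]⟩
    have hjump := cauchySolution_add_period_sub hlam hlo hΔ hmem
    rw [stripSolution_of_mem_Ioo ⟨hlop, h⟩, ← hjump, sub_add_cancel, add_sub_cancel]

lemma continuousWithinAt_of_logStrip_inter {R J U : Set ℝ} {f : ℂ × ℂ → ℂ} (hU : IsOpen U)
    (hp0 : p.1 ≠ 0) (hpU : p.2.re - Real.log ‖p.1‖ ∈ U)
    (hf : ContinuousWithinAt f (logStrip R (J ∩ U)) p) :
    ContinuousWithinAt f (logStrip R J) p := by
  refine hf.mono_of_mem_nhdsWithin ?_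
  have hcont : ContinuousAt (fun q : ℂ × ℂ => q.2.re - Real.log ‖q.1‖) p :=
    ContinuousAt.sub (by fun_prop) (ContinuousAt.log (by fun_prop) (norm_ne_zero_iff.2 hp0))
  filter_upwards [self_mem_nhdsWithin, nhdsWithin_le_nhds (hcont (hU.mem_nhds hpU))] with q hq hqU
  exact ⟨hq.1, hq.2, hqU⟩

lemma continuousOn_cauchySolution_add_period_sub (hlam : 0 < lam.re) (hlo : lo < hi)
    (hΔ : IsAdmissible Δ δ lo hi M) :
    ContinuousOn (fun p => cauchySolution lam Δ lo hi (p.1, p.2 + lam) - Δ p)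
      (logStrip (Ioc 0 δ) (Ico lo hi)) := by
  refine ((continuousOn_cauchySolution hlam hlo hΔ).comp (by fun_prop) fun p hp =>
    add_period_mem_logStrip hp fun x hx => ?_).sub
    (hΔ.continuousOn.mono (logStrip_mono Subset.rfl Ico_subset_Icc_self))
  exact ⟨by linarith [hx.1], by linarith [hx.2]⟩

lemma continuousOn_cauchySolution_sub_period_add (hlam : 0 < lam.re) (hlo : lo < hi)
    (hΔ : IsAdmissible Δ δ lo hi M) :
    ContinuousOn (fun p => cauchySolution lam Δ lo hi (p.1, p.2 - lam) + Δ (p.1, p.2 - lam))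
      (logStrip (Ioc 0 δ) (Ioc (lo + lam.re) (hi + lam.re))) := by
  have hcont : ContinuousOn (fun p => cauchySolution lam Δ lo hi p + Δ p)
      (logStrip (Ioc 0 δ) (Ioc lo hi)) :=
    ((continuousOn_cauchySolution hlam hlo hΔ).mono (logStrip_mono Subset.rfl
      (Ioc_subset_Ioo_right (lt_add_of_pos_right _ hlam)))).add
      (hΔ.continuousOn.mono (logStrip_mono Subset.rfl Ioc_subset_Icc_self))
  exact hcont.comp (f := fun p : ℂ × ℂ => (p.1, p.2 - lam)) (by fun_prop) fun p hp =>
    sub_period_mem_logStrip hp fun x hx => ⟨by linarith [hx.1], by linarith [hx.2]⟩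

lemma continuousOn_stripSolution (hlam : 0 < lam.re) (hlo : lo < hi)
    (hΔ : IsAdmissible Δ δ lo hi M) :
    ContinuousOn (stripSolution lam Δ lo hi) (logStrip (Ioc 0 δ) (Icc lo (hi + lam.re))) := by
  intro p hp
  have hp0 : p.1 ≠ 0 := norm_pos_iff.1 hp.1.1
  rcases lt_or_ge (p.2.re - Real.log ‖p.1‖) hi with hhi | hhi
  · refine continuousWithinAt_of_logStrip_inter isOpen_Iio hp0 hhi
      (((continuousOn_cauchySolution_add_period_sub hlam hlo hΔ).mono ?_).congr (fun q hq =>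
        stripSolution_of_lt hlam hlo hΔ ⟨hq.1, hq.2.2⟩) p ⟨hp.1, hp.2, hhi⟩)
    exact logStrip_mono Subset.rfl fun x hx => ⟨hx.1.1, hx.2⟩
  rcases lt_or_ge (lo + lam.re) (p.2.re - Real.log ‖p.1‖) with hgt | hgt
  · refine continuousWithinAt_of_logStrip_inter isOpen_Ioi hp0 hgt
      (((continuousOn_cauchySolution_sub_period_add hlam hlo hΔ).mono ?_).congr (fun q hq =>
        stripSolution_of_gt hlam hlo hΔ ⟨hq.1, hq.2.2⟩) p ⟨hp.1, hp.2, hgt⟩)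
    exact logStrip_mono Subset.rfl fun x hx => ⟨hx.2, hx.1.2⟩
  · refine continuousWithinAt_of_logStrip_inter isOpen_Ioo hp0
      (show _ ∈ Ioo lo (hi + lam.re) from ⟨by linarith, by linarith⟩)
      (((continuousOn_cauchySolution hlam hlo hΔ).mono (logStrip_mono Subset.rfl
        inter_subset_right)).congr (fun q hq => stripSolution_of_mem_Ioo hq.2.2) p ⟨hp.1, hp.2, ?_⟩)
    exact ⟨by linarith, by linarith⟩

lemma differentiableOn_stripSolution (hlam : 0 < lam.re) (hlo : lo < hi)
    (hΔ : IsAdmissible Δ δ lo hi M) :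
    DifferentiableOn ℂ (stripSolution lam Δ lo hi)
      (logStrip (Ioo 0 δ) (Ioo lo (hi + lam.re))) :=
  (differentiableOn_cauchySolution hlam hlo hΔ).congr fun _ hp => stripSolution_of_mem_Ioo hp.2

lemma stripSolution_add_period_sub (hlam : 0 < lam.re) (hlo : lo < hi)
    (hΔ : IsAdmissible Δ δ lo hi M) (hp : p ∈ logStrip (Ioc 0 δ) (Icc lo hi)) :
    stripSolution lam Δ lo hi (p.1, p.2 + lam) - stripSolution lam Δ lo hi p = Δ p := by
  rcases hp.2.2.lt_or_eq with h | h
  · have hmem : (p.1, p.2 + lam) ∈ logStrip (Ioc 0 δ) (Ioo lo (hi + lam.re)) :=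
      add_period_mem_logStrip (J := Ico lo hi) ⟨hp.1, hp.2.1, h⟩ fun x hx =>
        ⟨by linarith [hx.1], by linarith [hx.2]⟩
    rw [stripSolution_of_mem_Ioo hmem.2, stripSolution_of_lt hlam hlo hΔ ⟨hp.1, h⟩,
      sub_sub_cancel]
  · have hmem : (p.1, p.2 + lam) ∈ logStrip (Ioc 0 δ) (Ioi (lo + lam.re)) :=
      add_period_mem_logStrip (J := Ioi lo) ⟨hp.1, hlo.trans_eq h.symm⟩ fun x hx =>
        mem_Ioi.2 (by linarith [mem_Ioi.1 hx])
    rw [stripSolution_of_gt hlam hlo hΔ hmem, stripSolution_of_mem_Ioo ⟨by linarith, by linarith⟩,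
      add_sub_cancel_right, add_sub_cancel_left]

lemma IsAdmissible.lowerWeight_mul_norm_le (hΔ : IsAdmissible Δ δ lo hi M) (hM : 0 ≤ M)
    (hp : p ∈ logStrip (Ioc 0 δ) (Icc lo hi)) :
    lowerWeight lam p.2 * ‖Δ p‖ ≤ (1 + ‖lam‖⁻¹) * M := by
  have hweight := lowerWeight_le_mul (lam := lam) p.2 p.2
  simp only [sub_self, lowerWeight, zero_div, zero_im, neg_zero, max_self, add_zero,
    mul_one] at hweight
  calc lowerWeight lam p.2 * ‖Δ p‖ ≤ (1 + ‖lam‖⁻¹) * (1 + ‖p.2‖) * ‖Δ p‖ := by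
        rw [lowerWeight]
        gcongr
    _ = (1 + ‖lam‖⁻¹) * ((1 + ‖p.2‖) * ‖Δ p‖) := mul_assoc _ _ _
    _ ≤ (1 + ‖lam‖⁻¹) * (M * (1 + p.2.im ^ 2)⁻¹) :=
        mul_le_mul_of_nonneg_left (hΔ.decay p.1 p.2 hp) (by positivity)
    _ ≤ (1 + ‖lam‖⁻¹) * M := by
        gcongr
        exact mul_le_of_le_one_right hM (inv_le_one_of_one_le₀ (by nlinarith))

lemma exists_lowerWeight_mul_norm_stripSolution_le (hlam : 0 < lam.re) (hlo : lo < hi) :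
    ∃ K, 0 < K ∧ ∀ {Δ : ℂ × ℂ → ℂ} {δ M : ℝ}, IsAdmissible Δ δ lo hi M → 0 ≤ M →
      ∀ p ∈ logStrip (Ioc 0 δ) (Icc lo (hi + lam.re)),
        lowerWeight lam p.2 * ‖stripSolution lam Δ lo hi p‖ ≤ K * M := by
  have hlam0 : lam ≠ 0 := ne_of_apply_ne re hlam.ne'
  obtain ⟨ρ, hρ, hρlt⟩ := exists_between (lt_min hlam (half_pos (sub_pos.2 hlo)))
  rw [lt_min_iff] at hρlt
  obtain ⟨K, hK0, hK⟩ := exists_lowerWeight_mul_norm_cauchySolution_le hlam hlo hρ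
  refine ⟨K + (1 + ‖lam‖⁻¹), by positivity, fun {Δ δ M} hΔ hM p hp => ?_⟩
  rw [add_mul]
  rcases le_or_gt (p.2.re - Real.log ‖p.1‖) (lo + ρ) with hleft | hleft
  · rw [stripSolution_of_lt hlam hlo hΔ ⟨hp.1, show _ < hi by linarith⟩]
    refine (mul_le_mul_of_nonneg_left (norm_sub_le _ _) lowerWeight_pos.le).trans ?_
    have hcauchy := hK hΔ _ (add_period_mem_logStrip (lam := lam)
      (J := Icc lo (lo + ρ)) ⟨hp.1, hp.2.1, hleft⟩ fun x hx =>
        ⟨by linarith [hx.1], by linarith [hx.2]⟩)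
    rw [lowerWeight_add_period hlam0] at hcauchy
    rw [mul_add]
    exact add_le_add hcauchy (hΔ.lowerWeight_mul_norm_le hM ⟨hp.1, hp.2.1, by linarith⟩)
  rcases le_or_gt (hi + lam.re - ρ) (p.2.re - Real.log ‖p.1‖) with hright | hright
  · rw [stripSolution_of_gt hlam hlo hΔ ⟨hp.1, show lo + lam.re < _ by linarith⟩]
    refine (mul_le_mul_of_nonneg_left (norm_add_le _ _) lowerWeight_pos.le).trans ?_
    have hmem : (p.1, p.2 - lam) ∈ logStrip (Ioc 0 δ) (Icc (hi - ρ) hi) :=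
      sub_period_mem_logStrip (J := Icc (hi + lam.re - ρ) (hi + lam.re)) ⟨hp.1, hright, hp.2.2⟩
        fun x hx => ⟨by linarith [hx.1], by linarith [hx.2]⟩
    rw [mul_add, ← lowerWeight_sub_period hlam0]
    exact add_le_add (hK hΔ _ ⟨hmem.1, by linarith [hmem.2.1], by linarith [hmem.2.2]⟩)
      (hΔ.lowerWeight_mul_norm_le hM ⟨hmem.1, by linarith [hmem.2.1], hmem.2.2⟩)
  · rw [stripSolution_of_mem_Ioo ⟨by linarith, by linarith⟩]
    exact (hK hΔ p ⟨hp.1, hleft.le, hright.le⟩).trans (le_add_of_nonneg_right (by positivity))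

end StripSolution

/-! ### Uniqueness -/

section Uniqueness

variable {lam : ℂ} {α β : ℝ} {h : ℂ → ℂ}

lemma exists_sub_int_mul_re_mem_Ioo (hlam : 0 < lam.re) (hαβ : α < β) (z : ℂ) :
    ∃ n : ℤ, (z - n * lam).re ∈ Ioo α (β + lam.re) := by
  obtain ⟨γ, hαγ, hγβ⟩ := exists_between hαβ
  have hmem := sub_toIcoDiv_zsmul_mem_Ico hlam γ z.re
  refine ⟨toIcoDiv hlam γ z.re, ?_⟩
  simp only [zsmul_eq_mul] at hmem
  simp only [sub_re, mul_re, intCast_re, intCast_im, zero_mul, sub_zero]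
  exact ⟨by linarith [hmem.1], by linarith [hmem.2]⟩

lemma apply_add_nat_mul_period (hlam : 0 < lam.re)
    (hper : ∀ z, z.re ∈ Ioo α β → h (z + lam) = h z) {z : ℂ} (hz : α < z.re) (n : ℕ)
    (hn : (z + n * lam).re < β + lam.re) : h (z + n * lam) = h z := by
  induction n with
  | zero => simp
  | succ n ih =>
    simp only [Nat.cast_succ, add_mul, one_mul, ← add_assoc, add_re (z + _)] at hn ⊢
    have hlt : (z + n * lam).re < β := by linarith
    have hgt : z.re ≤ (z + n * lam).re := by
      simpa using mul_nonneg n.cast_nonneg hlam.le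
    rw [hper _ ⟨hz.trans_le hgt, hlt⟩, ih (hlt.trans (lt_add_of_pos_right _ hlam))]

lemma apply_sub_int_mul_period_eq (hlam : 0 < lam.re)
    (hper : ∀ z, z.re ∈ Ioo α β → h (z + lam) = h z) {z : ℂ} {m n : ℤ}
    (hm : (z - m * lam).re ∈ Ioo α (β + lam.re)) (hn : (z - n * lam).re ∈ Ioo α (β + lam.re)) :
    h (z - m * lam) = h (z - n * lam) := by
  wlog hmn : m ≤ n generalizing m n
  · exact (this hn hm (le_of_not_ge hmn)).symm
  obtain ⟨k, rfl⟩ := Int.le.dest hmn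
  have hz : z - m * lam = z - (m + k : ℤ) * lam + k * lam := by push_cast; ring
  rw [hz] at hm ⊢
  exact apply_add_nat_mul_period hlam hper hn.1 k hm.2

lemma exists_entire_extension (hlam : 0 < lam.re) (hαβ : α < β)
    (hd : DifferentiableOn ℂ h (re ⁻¹' Ioo α (β + lam.re)))
    (hper : ∀ z, z.re ∈ Ioo α β → h (z + lam) = h z) :
    ∃ H : ℂ → ℂ, Differentiable ℂ H ∧
      ∀ (z : ℂ) (n : ℤ), (z - n * lam).re ∈ Ioo α (β + lam.re) → H z = h (z - n * lam) := by
  choose N hN using exists_sub_int_mul_re_mem_Ioo hlam hαβ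
  have hH (z : ℂ) (n : ℤ) (hn : (z - n * lam).re ∈ Ioo α (β + lam.re)) :
      h (z - N z * lam) = h (z - n * lam) := apply_sub_int_mul_period_eq hlam hper (hN z) hn
  refine ⟨fun z => h (z - N z * lam), fun z => ?_, hH⟩
  have hopen : IsOpen (re ⁻¹' Ioo α (β + lam.re)) := isOpen_Ioo.preimage continuous_re
  have hnear : ∀ᶠ w in 𝓝 z, (w - N z * lam).re ∈ Ioo α (β + lam.re) :=
    (by fun_prop : Continuous fun w : ℂ => (w - N z * lam).re).continuousAt
      (isOpen_Ioo.mem_nhds (hN z))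
  refine DifferentiableAt.congr_of_eventuallyEq ?_ (hnear.mono fun w hw => hH w (N z) hw)
  exact (hd.differentiableAt (hopen.mem_nhds (hN z))).comp z (by fun_prop)

lemma eqOn_zero_of_periodic_of_tendsto (hlam : 0 < lam.re) (hαβ : α < β)
    (hd : DifferentiableOn ℂ h (re ⁻¹' Ioo α (β + lam.re)))
    (hper : ∀ z, z.re ∈ Ioo α β → h (z + lam) = h z)
    (hbdd : Bornology.IsBounded (h '' (re ⁻¹' Ioo α (β + lam.re))))
    (hlim : Tendsto h (comap (fun z => (z / lam).im) atBot ⊓ 𝓟 (re ⁻¹' Ioo α (β + lam.re)))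
      (𝓝 0)) :
    EqOn h 0 (re ⁻¹' Ioo α (β + lam.re)) := by
  intro z hz
  have hlam0 : lam ≠ 0 := ne_of_apply_ne re hlam.ne'
  obtain ⟨H, hHd, hH⟩ := exists_entire_extension hlam hαβ hd hper
  choose N hN using exists_sub_int_mul_re_mem_Ioo hlam hαβ
  have hHN (w : ℂ) : H w = h (w - N w * lam) := hH w (N w) (hN w)
  have hHz : H z = h z := by simpa using hH z 0 (by simpa using hz)
  have hHb : Bornology.IsBounded (range H) :=
    hbdd.subset (range_subset_iff.2 fun w => ⟨_, hN w, (hHN w).symm⟩)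
  let w : ℝ → ℂ := fun t => -(t * I) * lam
  have hw : Tendsto (fun t => w t - N (w t) * lam) atTop
      (comap (fun z => (z / lam).im) atBot ⊓ 𝓟 (re ⁻¹' Ioo α (β + lam.re))) := by
    refine tendsto_inf.2 ⟨tendsto_comap_iff.2 ?_, tendsto_principal.2 (.of_forall fun t => hN _)⟩
    have him (t : ℝ) : ((w t - N (w t) * lam) / lam).im = -t := by
      rw [← sub_mul, mul_div_cancel_right₀ _ hlam0]
      simp
    simpa only [Function.comp_def, him] using tendsto_neg_atTop_atBot
  have hconst (t : ℝ) : h (w t - N (w t) * lam) = h z := by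
    rw [← hHN, ← hHz]
    exact hHd.apply_eq_apply_of_bounded hHb _ _
  exact tendsto_nhds_unique (by simpa only [Function.comp_def, hconst] using tendsto_const_nhds)
    (hlim.comp hw)

lemma eqOn_zero_of_periodic_of_tendsto_of_continuousOn (hlam : 0 < lam.re) (hαβ : α < β)
    (hc : ContinuousOn h (re ⁻¹' Icc α (β + lam.re)))
    (hd : DifferentiableOn ℂ h (re ⁻¹' Ioo α (β + lam.re)))
    (hper : ∀ z, z.re ∈ Ioo α β → h (z + lam) = h z)
    (hbdd : Bornology.IsBounded (h '' (re ⁻¹' Ioo α (β + lam.re))))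
    (hlim : Tendsto h (comap (fun z => (z / lam).im) atBot ⊓ 𝓟 (re ⁻¹' Ioo α (β + lam.re)))
      (𝓝 0)) :
    EqOn h 0 (re ⁻¹' Icc α (β + lam.re)) := by
  have hlt : α < β + lam.re := hαβ.trans (lt_add_of_pos_right _ hlam)
  refine (eqOn_zero_of_periodic_of_tendsto hlam hαβ hd hper hbdd hlim).of_subset_closure hc
    continuousOn_const (preimage_mono Ioo_subset_Icc_self) ?_
  rw [closure_preimage_re, closure_Ioo hlt.ne]

end Uniqueness

/-! ### Solutions on the parameter strips -/

/-- Condition (2) on a solution: boundedness on `S`, and boundedness of `‖φ‖ * √|im (ζ / lam)|` on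
the part of `S` with `im (ζ / lam) ≤ -1`. -/
def HasLowerDecayOn (lam : ℂ) (φ : ℂ × ℂ → ℂ) (S : Set (ℂ × ℂ)) : Prop :=
  (∃ M : ℝ, ∀ p ∈ S, ‖φ p‖ ≤ M) ∧
  ∃ M : ℝ, ∀ p ∈ S, (p.2 / lam).im ≤ -1 → ‖φ p‖ * √|(p.2 / lam).im| ≤ M

/-- The period `λ = -2πiτ` of the theorem. -/
noncomputable abbrev period (τ : ℂ) : ℂ :=
  -(2 * Real.pi * I * τ)

section LowerDecay

variable {lam : ℂ} {φ ψ : ℂ × ℂ → ℂ} {S : Set (ℂ × ℂ)} {δ lo hi M : ℝ}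

lemma HasLowerDecayOn.sub (hφ : HasLowerDecayOn lam φ S) (hψ : HasLowerDecayOn lam ψ S) :
    HasLowerDecayOn lam (φ - ψ) S := by
  obtain ⟨⟨M₁, h₁⟩, N₁, k₁⟩ := hφ
  obtain ⟨⟨M₂, h₂⟩, N₂, k₂⟩ := hψ
  refine ⟨⟨M₁ + M₂, fun p hp => ?_⟩, N₁ + N₂, fun p hp him => ?_⟩
  · exact norm_sub_le_of_le (h₁ p hp) (h₂ p hp)
  · refine (mul_le_mul_of_nonneg_right (norm_sub_le _ _) (Real.sqrt_nonneg _)).trans ?_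
    rw [add_mul]
    exact add_le_add (k₁ p hp him) (k₂ p hp him)

lemma sqrt_abs_im_div_le_lowerWeight {z : ℂ} (h : (z / lam).im ≤ -1) :
    √|(z / lam).im| ≤ lowerWeight lam z := by
  rw [lowerWeight, max_eq_right (by linarith), abs_of_neg (by linarith), Real.sqrt_le_left
    (by linarith)]
  nlinarith

lemma norm_mul_sqrt_le_of_lowerWeight_mul_le {z w : ℂ} (hw : lowerWeight lam z * ‖w‖ ≤ M)
    (h : (z / lam).im ≤ -1) : ‖w‖ * √|(z / lam).im| ≤ M := by
  rw [mul_comm]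
  exact (mul_le_mul_of_nonneg_right (sqrt_abs_im_div_le_lowerWeight h) (norm_nonneg _)).trans hw

lemma norm_le_of_lowerWeight_mul_le {z w : ℂ} (hw : lowerWeight lam z * ‖w‖ ≤ M) : ‖w‖ ≤ M :=
  (le_mul_of_one_le_left (norm_nonneg _) one_le_lowerWeight).trans hw

lemma hasLowerDecayOn_of_lowerWeight_mul_le (h : ∀ p ∈ S, lowerWeight lam p.2 * ‖φ p‖ ≤ M) :
    HasLowerDecayOn lam φ S :=
  ⟨⟨M, fun p hp => norm_le_of_lowerWeight_mul_le (h p hp)⟩,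
    M, fun p hp => norm_mul_sqrt_le_of_lowerWeight_mul_le (h p hp)⟩

lemma tendsto_zero_of_mul_sqrt_le {h : ℂ → ℂ} {s : Set ℂ}
    (hM : ∀ z ∈ s, (z / lam).im ≤ -1 → ‖h z‖ * √|(z / lam).im| ≤ M) :
    Tendsto h (comap (fun z => (z / lam).im) atBot ⊓ 𝓟 s) (𝓝 0) := by
  have him : Tendsto (fun z => (z / lam).im) (comap (fun z => (z / lam).im) atBot ⊓ 𝓟 s) atBot :=
    tendsto_comap.mono_left inf_le_left
  refine squeeze_zero_norm' ?_
    ((Real.tendsto_sqrt_atTop.comp (tendsto_abs_atBot_atTop.comp him)).const_div_atTop M)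
  filter_upwards [him.eventually_le_atBot (-1), mem_inf_of_right (mem_principal_self s)]
    with z hz hzs
  rw [Function.comp_apply, Function.comp_apply,
    le_div_iff₀ (Real.sqrt_pos.2 (abs_pos.2 (by linarith)))]
  exact hM z hzs hz

lemma eqOn_zero_of_periodic_of_hasLowerDecayOn (hlam : 0 < lam.re) (hlo : lo < hi)
    (hc : ContinuousOn φ (logStrip (Ioc 0 δ) (Icc lo (hi + lam.re))))
    (hd : DifferentiableOn ℂ φ (logStrip (Ioo 0 δ) (Ioo lo (hi + lam.re))))
    (hper : ∀ p ∈ logStrip (Ioc 0 δ) (Ioo lo hi), φ (p.1, p.2 + lam) = φ p)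
    (hdecay : HasLowerDecayOn lam φ (logStrip (Ioc 0 δ) (Icc lo (hi + lam.re)))) :
    EqOn φ 0 (logStrip (Ioc 0 δ) (Icc lo (hi + lam.re))) := by
  rintro ⟨c, ζ⟩ ⟨hcδ, hζ⟩
  obtain ⟨⟨M, hM⟩, N, hN⟩ := hdecay
  have hmem {z : ℂ} (hz : z.re ∈ Icc (Real.log ‖c‖ + lo) (Real.log ‖c‖ + hi + lam.re)) :
      (c, z) ∈ logStrip (Ioc 0 δ) (Icc lo (hi + lam.re)) :=
    ⟨hcδ, by linarith [hz.1], by linarith [hz.2]⟩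
  have hdiff := differentiableOn_slice
    (hc.mono (logStrip_mono Subset.rfl Ioo_subset_Icc_self)) hd hcδ
  rw [← add_assoc] at hdiff
  refine eqOn_zero_of_periodic_of_tendsto_of_continuousOn (h := fun z => φ (c, z)) hlam
    (add_lt_add_right hlo _) (hc.comp (by fun_prop) fun z hz => hmem hz) hdiff ?_ ?_ ?_
    ⟨by linarith [hζ.1], by linarith [hζ.2]⟩
  · exact fun z hz => hper (c, z) ⟨hcδ, by linarith [hz.1], by linarith [hz.2]⟩
  · refine isBounded_iff_forall_norm_le.2 ⟨M, ?_⟩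
    rintro _ ⟨z, hz, rfl⟩
    exact hM _ (hmem (Ioo_subset_Icc_self hz))
  · exact tendsto_zero_of_mul_sqrt_le fun z hz => hN _ (hmem (Ioo_subset_Icc_self hz))

end LowerDecay

section ParamStrip

variable {a b δ : ℝ} {τ : ℂ} {Δ φ ψ : ℂ × ℂ → ℂ}

lemma paramStrip_eq_logStrip (a b δ : ℝ) :
    paramStrip a b δ = logStrip (Ioc 0 δ) (Icc (-Real.log b) (-Real.log a)) := by
  ext p
  simp only [paramStrip, logStrip, mem_ofPred_eq, mem_Ioc, mem_Icc, and_assoc,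
    neg_le_sub_iff_le_add, sub_le_iff_le_add, ← sub_eq_neg_add]

lemma period_re (τ : ℂ) : (period τ).re = 2 * Real.pi * τ.im := by
  simp

lemma paramStrip'_eq_logStrip (τ : ℂ) (a b δ : ℝ) :
    paramStrip' τ a b δ =
      logStrip (Ioc 0 δ) (Icc (-Real.log b) (-Real.log a + (period τ).re)) := by
  ext p
  rw [paramStrip', logStrip, period_re]
  constructor
  · rintro ⟨h0, hδ, hlo, hhi⟩
    exact ⟨⟨h0, hδ⟩, by linarith, by linarith⟩
  · rintro ⟨⟨h0, hδ⟩, hlo, hhi⟩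
    exact ⟨h0, hδ, by linarith, by linarith⟩

lemma interior_logStrip_Ioc_Icc (δ lo hi : ℝ) :
    interior (logStrip (Ioc 0 δ) (Icc lo hi)) = logStrip (Ioo 0 δ) (Ioo lo hi) := by
  rw [interior_logStrip Ioc_subset_Ioi_self, interior_Ioc, interior_Icc]

lemma diffSolProp_iff : diffSolProp τ a b δ Δ φ ↔
    ContinuousOn φ (paramStrip' τ a b δ) ∧
    DifferentiableOn ℂ φ
      (logStrip (Ioo 0 δ) (Ioo (-Real.log b) (-Real.log a + (period τ).re))) ∧
    (∀ p ∈ paramStrip a b δ, φ (p.1, p.2 + period τ) - φ p = Δ p) ∧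
    HasLowerDecayOn (period τ) φ (paramStrip' τ a b δ) := by
  rw [← interior_logStrip_Ioc_Icc, ← paramStrip'_eq_logStrip]
  rfl

lemma period_re_pos (hτ : 0 < τ.im) : 0 < (period τ).re := by
  rw [period_re]
  positivity

lemma eqOn_of_diffSolProp (hτ : 0 < τ.im) (ha : 0 < a) (hab : a < b)
    (hφ : diffSolProp τ a b δ Δ φ) (hψ : diffSolProp τ a b δ Δ ψ) :
    EqOn φ ψ (paramStrip' τ a b δ) := by
  obtain ⟨hφc, hφd, hφeq, hφdecay⟩ := diffSolProp_iff.1 hφ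
  obtain ⟨hψc, hψd, hψeq, hψdecay⟩ := diffSolProp_iff.1 hψ
  rw [paramStrip'_eq_logStrip] at *
  rw [paramStrip_eq_logStrip] at hφeq hψeq
  refine fun p hp => sub_eq_zero.1 (eqOn_zero_of_periodic_of_hasLowerDecayOn (φ := φ - ψ)
    (period_re_pos hτ) (neg_lt_neg (Real.log_lt_log ha hab)) (hφc.sub hψc) (hφd.sub hψd)
    (fun q hq => ?_) (hφdecay.sub hψdecay) hp)
  have hq' := logStrip_mono Subset.rfl Ioo_subset_Icc_self hq
  exact sub_eq_sub_iff_sub_eq_sub.1 ((hφeq q hq').trans (hψeq q hq').symm)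

lemma one_add_norm_mul_one_add_im_sq_le {ζ : ℂ} {m : ℕ} (hre : ζ.re ≤ -1) (hm : 3 ≤ m) :
    (1 + ‖ζ‖) * (1 + ζ.im ^ 2) ≤ 2 * ‖ζ‖ ^ m := by
  have hsq : 1 + ζ.im ^ 2 ≤ ‖ζ‖ ^ 2 := by
    rw [← normSq_eq_norm_sq, normSq_apply]
    nlinarith
  have hone : 1 ≤ ‖ζ‖ := (le_abs.2 (.inr (le_neg.2 hre))).trans (abs_re_le_norm ζ)
  calc (1 + ‖ζ‖) * (1 + ζ.im ^ 2) ≤ (‖ζ‖ + ‖ζ‖) * ‖ζ‖ ^ 2 := by gcongr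
    _ = 2 * ‖ζ‖ ^ 3 := by ring
    _ ≤ 2 * ‖ζ‖ ^ m := by gcongr

lemma re_le_neg_one_of_mem_logStrip {lo : ℝ} (ha : 0 < a) (hδ : δ ≤ a * Real.exp (-1))
    {p : ℂ × ℂ} (hp : p ∈ logStrip (Ioc 0 δ) (Icc lo (-Real.log a))) : p.2.re ≤ -1 := by
  have hlog := Real.log_le_log hp.1.1 (hp.1.2.trans hδ)
  rw [Real.log_mul ha.ne' (Real.exp_ne_zero _), Real.log_exp] at hlog
  linarith [hp.2.2]

lemma isAdmissible_of_norm_mul_pow_le {m : ℕ} {N : ℝ} (ha : 0 < a) (hm : 3 ≤ m)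
    (hδ : δ ≤ a * Real.exp (-1)) (hc : ContinuousOn Δ (paramStrip a b δ))
    (hd : DifferentiableOn ℂ Δ (interior (paramStrip a b δ)))
    (hN : ∀ p ∈ paramStrip a b δ, ‖Δ p‖ * ‖p.2‖ ^ m ≤ N) :
    IsAdmissible Δ δ (-Real.log b) (-Real.log a) (2 * N) := by
  rw [paramStrip_eq_logStrip] at hc hd hN
  rw [interior_logStrip_Ioc_Icc] at hd
  refine ⟨hc, hd, fun c η hη => ?_⟩
  rw [← div_eq_mul_inv, le_div_iff₀ (by positivity)]
  calc (1 + ‖η‖) * ‖Δ (c, η)‖ * (1 + η.im ^ 2)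
      = (1 + ‖η‖) * (1 + η.im ^ 2) * ‖Δ (c, η)‖ := by ring
    _ ≤ 2 * ‖η‖ ^ m * ‖Δ (c, η)‖ := by
        gcongr ?_ * _
        exact one_add_norm_mul_one_add_im_sq_le (re_le_neg_one_of_mem_logStrip ha hδ hη) hm
    _ = 2 * (‖Δ (c, η)‖ * ‖η‖ ^ m) := by ring
    _ ≤ 2 * N := by gcongr; exact hN (c, η) hη

lemma exists_diffSolProp_of_isAdmissible (hτ : 0 < τ.im) (ha : 0 < a) (hab : a < b) :
    ∃ K, 0 < K ∧ ∀ {Δ : ℂ × ℂ → ℂ} {δ M : ℝ},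
      IsAdmissible Δ δ (-Real.log b) (-Real.log a) M → 0 ≤ M →
        ∃ φ, diffSolProp τ a b δ Δ φ ∧
          ∀ p ∈ paramStrip' τ a b δ, lowerWeight (period τ) p.2 * ‖φ p‖ ≤ K * M := by
  have hlam := period_re_pos hτ
  have hlo : -Real.log b < -Real.log a := neg_lt_neg (Real.log_lt_log ha hab)
  obtain ⟨K, hK0, hK⟩ := exists_lowerWeight_mul_norm_stripSolution_le hlam hlo
  refine ⟨K, hK0, fun {Δ δ M} hΔ hM => ⟨stripSolution (period τ) Δ (-Real.log b) (-Real.log a), ?_⟩⟩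
  rw [diffSolProp_iff, paramStrip'_eq_logStrip, paramStrip_eq_logStrip]
  exact ⟨⟨continuousOn_stripSolution hlam hlo hΔ, differentiableOn_stripSolution hlam hlo hΔ,
    fun p hp => stripSolution_add_period_sub hlam hlo hΔ hp,
    hasLowerDecayOn_of_lowerWeight_mul_le (hK hΔ hM)⟩, hK hΔ hM⟩

end ParamStrip

end StripDifference

open StripDifference in
theorem statement13_general (τ : ℂ) (hτ : 0 < τ.im) (a b : ℝ) (ha : 0 < a) (hab : a < b)
    (m : ℕ) (hm : 3 ≤ m) :
    ∃ δ₀ C : ℝ, 0 < δ₀ ∧ 0 < C ∧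
      ∀ δ : ℝ, 0 < δ → δ ≤ δ₀ →
        ∀ Δ : ℂ × ℂ → ℂ,
          ContinuousOn Δ (paramStrip a b δ) →
          DifferentiableOn ℂ Δ (interior (paramStrip a b δ)) →
          BddAbove ((fun p : ℂ × ℂ => ‖Δ p‖ * ‖p.2‖ ^ m) ''
            paramStrip a b δ) →
          ∃ φ : ℂ × ℂ → ℂ,
            diffSolProp τ a b δ Δ φ ∧
            (∀ φ' : ℂ × ℂ → ℂ, diffSolProp τ a b δ Δ φ' →
              ∀ p ∈ paramStrip' τ a b δ, φ' p = φ p) ∧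
            (∀ p ∈ paramStrip' τ a b δ,
              ‖φ p‖ ≤
                C * sSup ((fun p : ℂ × ℂ =>
                    ‖Δ p‖ * ‖p.2‖ ^ m) '' paramStrip a b δ)) ∧
            (∀ p ∈ paramStrip' τ a b δ,
              (p.2 / (-(2 * (Real.pi : ℂ) * Complex.I * τ))).im ≤ -1 →
              ‖φ p‖ ≤
                C * sSup ((fun p : ℂ × ℂ =>
                    ‖Δ p‖ * ‖p.2‖ ^ m) '' paramStrip a b δ) /
                  Real.sqrt |(p.2 / (-(2 * (Real.pi : ℂ) * Complex.I * τ))).im|) := by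
  obtain ⟨K, hK0, hK⟩ := exists_diffSolProp_of_isAdmissible hτ ha hab
  refine ⟨a * Real.exp (-1), K * 2, by positivity, by positivity, fun δ _ hδ Δ hc hd hbdd => ?_⟩
  set N := sSup ((fun p : ℂ × ℂ => ‖Δ p‖ * ‖p.2‖ ^ m) '' paramStrip a b δ)
  have hN : ∀ p ∈ paramStrip a b δ, ‖Δ p‖ * ‖p.2‖ ^ m ≤ N := fun p hp =>
    le_csSup hbdd (Set.mem_image_of_mem _ hp)
  have hN0 : 0 ≤ N := Real.sSup_nonneg (by rintro _ ⟨p, -, rfl⟩; positivity)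
  obtain ⟨φ, hφ, hweight⟩ :=
    hK (isAdmissible_of_norm_mul_pow_le ha hm hδ hc hd hN) (by positivity)
  rw [← mul_assoc] at hweight
  refine ⟨φ, hφ, fun φ' hφ' => eqOn_of_diffSolProp hτ ha hab hφ' hφ,
    fun p hp => norm_le_of_lowerWeight_mul_le (hweight p hp), fun p hp him => ?_⟩
  rw [le_div_iff₀ (Real.sqrt_pos.2 (abs_pos.2 (by linarith)))]
  exact norm_mul_sqrt_le_of_lowerWeight_mul_le (hweight p hp) him

/-- parametrized resolution of the difference equation with estimates and
uniqueness; `q = exp(2πiτ)`, `λ = −2πiτ`, `λ₁ = 2π·Im τ`. -/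
theorem statement13 (τ : ℂ) (hτ : 0 < τ.im) (a b : ℝ) (ha : 0 < a) (hab : a < b)
    (haqb : a < ‖Complex.exp (2 * (Real.pi : ℂ) * Complex.I * τ)‖ * b)
    (m : ℕ) (hm : 3 ≤ m) :
    ∃ δ₀ C : ℝ, 0 < δ₀ ∧ 0 < C ∧
      ∀ δ : ℝ, 0 < δ → δ ≤ δ₀ →
        ∀ Δ : ℂ × ℂ → ℂ,
          ContinuousOn Δ (paramStrip a b δ) →
          DifferentiableOn ℂ Δ (interior (paramStrip a b δ)) →
          BddAbove ((fun p : ℂ × ℂ => ‖Δ p‖ * ‖p.2‖ ^ m) ''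
            paramStrip a b δ) →
          ∃ φ : ℂ × ℂ → ℂ,
            diffSolProp τ a b δ Δ φ ∧
            (∀ φ' : ℂ × ℂ → ℂ, diffSolProp τ a b δ Δ φ' →
              ∀ p ∈ paramStrip' τ a b δ, φ' p = φ p) ∧
            (∀ p ∈ paramStrip' τ a b δ,
              ‖φ p‖ ≤
                C * sSup ((fun p : ℂ × ℂ =>
                    ‖Δ p‖ * ‖p.2‖ ^ m) '' paramStrip a b δ)) ∧
            (∀ p ∈ paramStrip' τ a b δ,
              (p.2 / (-(2 * (Real.pi : ℂ) * Complex.I * τ))).im ≤ -1 →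
              ‖φ p‖ ≤
                C * sSup ((fun p : ℂ × ℂ =>
                    ‖Δ p‖ * ‖p.2‖ ^ m) '' paramStrip a b δ) /
                  Real.sqrt |(p.2 / (-(2 * (Real.pi : ℂ) * Complex.I * τ))).im|) :=
  statement13_general τ hτ a b ha hab m hm
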